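/- arXiv:1608.04635 — 8 statements merged into one kernel-verified Lean document; each statement's English description precedes it below -/
import Mathlib

section
/- Bruhat decomposition for SO_{n+1}: for every integer n ≥ 1 and every Q ∈ SO_{n+1}, there exists a unique signed permutation matrix P of size n+1 with det P = 1 such that Q = U₁ P U₂ for some upper triangular (n+1)×(n+1) real matrices U₁ and U₂ with positive diagonal entries. Equivalently, SO_{n+1} is the disjoint union of the Bruhat cells Bru_P over the signed permutation matrices P of determinant 1. -/
open Matrix

/-- An upper triangular real matrix with positive diagonal entries. -/
def IsUpperPos {m : ℕ} (U : Matrix (Fin m) (Fin m) ℝ) : Prop :=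
  (∀ i j : Fin m, j < i → U i j = 0) ∧ ∀ i : Fin m, 0 < U i i

/-- A signed permutation matrix: exactly one nonzero entry in each row and column,
each nonzero entry being `1` or `-1`. -/
def IsSignedPerm {m : ℕ} (P : Matrix (Fin m) (Fin m) ℝ) : Prop :=
  (∀ i : Fin m, ∃! j : Fin m, P i j ≠ 0) ∧
  (∀ j : Fin m, ∃! i : Fin m, P i j ≠ 0) ∧
  (∀ i j : Fin m, P i j = 0 ∨ P i j = 1 ∨ P i j = -1)

/-- A special orthogonal matrix. -/
def IsSpecialOrthogonal {m : ℕ} (Q : Matrix (Fin m) (Fin m) ℝ) : Prop :=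
  Qᵀ * Q = 1 ∧ Q.det = 1

/-!
A basis adapted to two flags, found by greedy column reduction. For each index `j`, among the
vectors with leading coefficient `1` at their last nonzero coordinate `j`, pick `v j` such that the
last nonzero coordinate `σ j` of `A *ᵥ v j` is as early as possible. If `σ j = σ k` with `j < k`,
then subtracting a multiple of `v j` from `v k` would cancel that coordinate, against minimality; so
`σ` is a permutation. The `v j` are the columns of an upper unitriangular `V`, and `A * V` is an
upper triangular matrix with its columns permuted and rescaled.

For uniqueness, compare the entries of `P * U = V * P'` at the nonzero positions of `P`: the
upper triangularity of `V` yields a pointwise inequality between the two permutations, which forces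
equality.
-/

section LastNonzero

variable {ι R K : Type*}

/-- `i` is the position of the last nonzero coordinate of `v`. A square matrix is upper triangular
with nonzero diagonal exactly when this holds for its `j`-th column at position `j`, for every
`j`. -/
def IsLastNonzero [LT ι] [Zero R] (v : ι → R) (i : ι) : Prop :=
  v i ≠ 0 ∧ ∀ k, i < k → v k = 0

lemma exists_isLastNonzero [Finite ι] [LinearOrder ι] [Zero R] {v : ι → R} (hv : v ≠ 0) :
    ∃ i, IsLastNonzero v i := by
  obtain ⟨i, hi⟩ := (Set.toFinite (Function.support v)).exists_maximal
    (Function.support_nonempty_iff.2 hv)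
  exact ⟨i, hi.prop, fun k hk => not_not.1 fun hvk => hi.not_gt hvk hk⟩

lemma IsLastNonzero.sub_smul [Preorder ι] [Ring R] {v w : ι → R} {j k : ι}
    (hv : IsLastNonzero v j) (hw : IsLastNonzero w k) (hjk : j < k) (c : R) :
    IsLastNonzero (w - c • v) k :=
  ⟨by simpa [hv.2 k hjk] using hw.1,
    fun l hl => by simp [hv.2 l (hjk.trans hl), hw.2 l hl]⟩

lemma IsLastNonzero.lt_of_sub_smul [LinearOrder ι] [DivisionRing K] {v w : ι → K} {i l : ι}
    (hv : IsLastNonzero v i) (hw : IsLastNonzero w i)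
    (hl : IsLastNonzero (w - (w i / v i) • v) l) : l < i := by
  by_contra! hil
  refine hl.1 ?_
  obtain rfl | hil := hil.eq_or_lt
  · simp [hv.1]
  · simp [hv.2 l hil, hw.2 l hil]

lemma exists_isLastNonzero_mulVec_minimal [Fintype ι] [LinearOrder ι] [CommRing R]
    [IsDomain R] {A : Matrix ι ι R} (hA : A.det ≠ 0) (j : ι) :
    ∃ v i, v j = 1 ∧ IsLastNonzero v j ∧ IsLastNonzero (A *ᵥ v) i ∧
      ∀ w l, w j = 1 → IsLastNonzero w j → IsLastNonzero (A *ᵥ w) l → i ≤ l := by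
  let S : Set ι := {i | ∃ v, v j = 1 ∧ IsLastNonzero v j ∧ IsLastNonzero (A *ᵥ v) i}
  have hS : S.Nonempty := by
    have hsingle : IsLastNonzero (Pi.single j (1 : R)) j :=
      ⟨by simp, fun k hk => by simp [hk.ne']⟩
    have hne : A *ᵥ Pi.single j 1 ≠ 0 := fun h =>
      hsingle.1 (congrFun (eq_zero_of_mulVec_eq_zero hA h) j)
    obtain ⟨i, hi⟩ := exists_isLastNonzero hne
    exact ⟨i, _, by simp, hsingle, hi⟩
  obtain ⟨i, ⟨v, hvj, hv, hi⟩, hmin⟩ := Set.exists_min_image S id S.toFinite hS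
  exact ⟨v, i, hvj, hv, hi, fun w l hwj hw hl => hmin l ⟨w, hwj, hw, hl⟩⟩

lemma exists_unitriangular_mul_isLastNonzero [Fintype ι] [LinearOrder ι] [Field K]
    {A : Matrix ι ι K} (hA : A.det ≠ 0) :
    ∃ (V : Matrix ι ι K) (σ : Equiv.Perm ι), V.IsUpperTriangular ∧ (∀ j, V j j = 1) ∧
      ∀ j, IsLastNonzero ((A * V).col j) (σ j) := by
  choose v s hvj hv hs hmin using exists_isLastNonzero_mulVec_minimal hA
  have hs_inj : Function.Injective s := by
    refine Function.Injective.of_lt_imp_ne fun j k hjk hsjk => ?_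
    have hsj := hsjk ▸ hs j
    let w := v k - ((A *ᵥ v k) (s k) / (A *ᵥ v j) (s k)) • v j
    have hw : IsLastNonzero w k := (hv j).sub_smul (hv k) hjk _
    have hwk : w k = 1 := by simp [w, (hv j).2 k hjk, hvj k]
    have hAw : A *ᵥ w ≠ 0 := fun h => hw.1 (congrFun (eq_zero_of_mulVec_eq_zero hA h) k)
    obtain ⟨l, hl⟩ := exists_isLastNonzero hAw
    have hlk : l < s k := hsj.lt_of_sub_smul (hs k) (by rwa [← mulVec_smul, ← mulVec_sub])
    exact hlk.not_ge (hmin k w l hwk hw hl)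
  exact ⟨of fun i j => v j i, Equiv.ofBijective s (Finite.injective_iff_bijective.1 hs_inj),
    fun i j hij => (hv j).2 i hij, hvj, hs⟩

end LastNonzero

section PosUpperTriangular

variable {ι R K : Type*}

/-- Upper triangular matrices with positive diagonal, over any ordered ring and any ordered index
type; `isUpperPos_iff` identifies the real case indexed by `Fin m` with `IsUpperPos`. -/
structure IsPosUpperTriangular [LT ι] [Zero R] [LT R] (U : Matrix ι ι R) : Prop where
  isUpperTriangular : U.IsUpperTriangular
  diag_pos (i : ι) : 0 < U i i

variable [Fintype ι] [LinearOrder ι]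

lemma mul_apply_self_of_isUpperTriangular [NonUnitalNonAssocSemiring R] {M N : Matrix ι ι R}
    (hM : M.IsUpperTriangular) (hN : N.IsUpperTriangular) (i : ι) :
    (M * N) i i = M i i * N i i := by
  rw [mul_apply, Fintype.sum_eq_single i]
  intro k hk
  obtain hki | hik := hk.lt_or_gt
  · rw [hM hki, zero_mul]
  · rw [hN hik, mul_zero]

namespace IsPosUpperTriangular

lemma mul [Semiring R] [PartialOrder R] [IsStrictOrderedRing R] {U V : Matrix ι ι R}
    (hU : IsPosUpperTriangular U) (hV : IsPosUpperTriangular V) :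
    IsPosUpperTriangular (U * V) where
  isUpperTriangular := hU.isUpperTriangular.mul hV.isUpperTriangular
  diag_pos i := by
    rw [mul_apply_self_of_isUpperTriangular hU.isUpperTriangular hV.isUpperTriangular]
    exact mul_pos (hU.diag_pos i) (hV.diag_pos i)

lemma det_pos [CommRing R] [PartialOrder R] [IsStrictOrderedRing R] {U : Matrix ι ι R}
    (hU : IsPosUpperTriangular U) : 0 < U.det := by
  rw [det_of_isUpperTriangular hU.isUpperTriangular]
  exact Finset.prod_pos fun i _ => hU.diag_pos i

variable [Field K] [LinearOrder K] [IsStrictOrderedRing K]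

lemma isUnit_det {U : Matrix ι ι K} (hU : IsPosUpperTriangular U) : IsUnit U.det :=
  hU.det_pos.ne'.isUnit

lemma inv {U : Matrix ι ι K} (hU : IsPosUpperTriangular U) : IsPosUpperTriangular U⁻¹ := by
  let := U.invertibleOfIsUnitDet hU.isUnit_det
  have hinv : U⁻¹.IsUpperTriangular := blockTriangular_inv_of_blockTriangular hU.isUpperTriangular
  refine ⟨hinv, fun i => pos_of_mul_pos_right ?_ (hU.diag_pos i).le⟩
  rw [← mul_apply_self_of_isUpperTriangular hU.isUpperTriangular hinv,
    mul_nonsing_inv _ hU.isUnit_det, one_apply_eq]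
  exact one_pos

end IsPosUpperTriangular

lemma isUpperPos_iff {m : ℕ} {U : Matrix (Fin m) (Fin m) ℝ} :
    IsUpperPos U ↔ IsPosUpperTriangular U :=
  ⟨fun h => ⟨h.1, h.2⟩, fun h => ⟨h.1, h.2⟩⟩

end PosUpperTriangular

section SignedPermMatrix

variable {ι R : Type*} [DecidableEq ι]

/-- The matrix sending the `j`-th basis vector to `ε j` times the `σ j`-th one. Thus the signed
permutation matrices are parametrized by a permutation and a choice of signs, the latter encoded as
units of `ℤ`. -/
def signedPermMatrix (R : Type*) [Ring R] (σ : Equiv.Perm ι) (ε : ι → ℤˣ) : Matrix ι ι R :=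
  of fun i j => if i = σ j then ((ε j : ℤ) : R) else 0

lemma signedPermMatrix_apply [Ring R] (σ : Equiv.Perm ι) (ε : ι → ℤˣ) (i j : ι) :
    signedPermMatrix R σ ε i j = if i = σ j then ((ε j : ℤ) : R) else 0 :=
  rfl

lemma intCast_units_mul_self [Ring R] (u : ℤˣ) : ((u : ℤ) : R) * ((u : ℤ) : R) = 1 := by
  rw [← Int.cast_mul, ← Units.val_mul, Int.units_mul_self, Units.val_one, Int.cast_one]

lemma signedPermMatrix_mul_apply [Fintype ι] [Ring R] (σ : Equiv.Perm ι) (ε : ι → ℤˣ)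
    (M : Matrix ι ι R) (i j : ι) :
    (signedPermMatrix R σ ε * M) (σ i) j = ((ε i : ℤ) : R) * M i j := by
  simp [mul_apply, signedPermMatrix_apply]

lemma mul_signedPermMatrix_apply [Fintype ι] [Ring R] (σ : Equiv.Perm ι) (ε : ι → ℤˣ)
    (M : Matrix ι ι R) (i j : ι) :
    (M * signedPermMatrix R σ ε) i j = M i (σ j) * ((ε j : ℤ) : R) := by
  simp [mul_apply, signedPermMatrix_apply]

lemma signedPermMatrix_eq_permMatrix_mul_diagonal [Fintype ι] [Ring R] (σ : Equiv.Perm ι)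
    (ε : ι → ℤˣ) :
    signedPermMatrix R σ ε = σ⁻¹.permMatrix R * diagonal fun j => ((ε j : ℤ) : R) := by
  ext i j
  simp [signedPermMatrix_apply, PEquiv.toMatrix_apply, Equiv.symm_apply_eq, Equiv.Perm.inv_def]

lemma det_signedPermMatrix [Fintype ι] [CommRing R] (σ : Equiv.Perm ι) (ε : ι → ℤˣ) :
    (signedPermMatrix R σ ε).det = ((Equiv.Perm.sign σ * ∏ j, ε j : ℤˣ) : ℤ) := by
  simp [signedPermMatrix_eq_permMatrix_mul_diagonal, det_permutation]

lemma isSignedPerm_signedPermMatrix {m : ℕ} (σ : Equiv.Perm (Fin m)) (ε : Fin m → ℤˣ) :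
    IsSignedPerm (signedPermMatrix ℝ σ ε) := by
  have hne (i j) : signedPermMatrix ℝ σ ε i j ≠ 0 ↔ i = σ j := by simp [signedPermMatrix_apply]
  simp only [IsSignedPerm, hne]
  refine ⟨fun i => by
    simpa only [eq_comm] using σ.bijective.existsUnique i, fun j => existsUnique_eq, fun i j => ?_⟩
  rw [signedPermMatrix_apply]
  split_ifs
  · obtain h | h := Int.units_eq_one_or (ε j) <;> simp [h]
  · exact .inl rfl

lemma IsSignedPerm.exists_eq_signedPermMatrix {m : ℕ} {P : Matrix (Fin m) (Fin m) ℝ}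
    (hP : IsSignedPerm P) : ∃ σ ε, P = signedPermMatrix ℝ σ ε := by
  obtain ⟨hrow, hcol, hval⟩ := hP
  choose s hs hs_unique using hcol
  have hs_inj : Function.Injective s := fun j k hjk =>
    (hrow (s j)).unique (hs j) (hjk ▸ hs k)
  have hsign (j) : ∃ u : ℤˣ, P (s j) j = ((u : ℤ) : ℝ) := by
    obtain h | h | h := hval (s j) j
    · exact absurd h (hs j)
    · exact ⟨1, by simpa using h⟩
    · exact ⟨-1, by simpa using h⟩
  choose ε hε using hsign
  refine ⟨Equiv.ofBijective s (Finite.injective_iff_bijective.1 hs_inj), ε, ?_⟩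
  ext i j
  rw [signedPermMatrix_apply, Equiv.ofBijective_apply]
  split_ifs with hij
  · rw [hij, hε]
  · exact not_not.1 fun h => hij (hs_unique j i h)

lemma isSignedPerm_iff {m : ℕ} {P : Matrix (Fin m) (Fin m) ℝ} :
    IsSignedPerm P ↔ ∃ σ ε, P = signedPermMatrix ℝ σ ε :=
  ⟨fun hP => hP.exists_eq_signedPermMatrix, by
    rintro ⟨σ, ε, rfl⟩
    exact isSignedPerm_signedPermMatrix σ ε⟩

end SignedPermMatrix

section Signs

variable {R : Type*} [Ring R] [LinearOrder R] [IsStrictOrderedRing R]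

lemma exists_intCast_units_mul_pos {x : R} (hx : x ≠ 0) : ∃ u : ℤˣ, 0 < x * ((u : ℤ) : R) := by
  obtain h | h := hx.lt_or_gt
  · exact ⟨-1, by simpa using h⟩
  · exact ⟨1, by simpa using h⟩

lemma units_eq_of_intCast_mul_eq_mul {u w : ℤˣ} {a b : R} (ha : 0 < a) (hb : 0 < b)
    (h : ((u : ℤ) : R) * a = b * ((w : ℤ) : R)) : u = w := by
  obtain rfl | rfl := Int.units_eq_one_or u <;> obtain rfl | rfl := Int.units_eq_one_or w
  · rfl
  · exact absurd h (by simpa using ((neg_lt_zero.2 hb).trans ha).ne')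
  · exact absurd h (by simpa using ((neg_lt_zero.2 ha).trans hb).ne)
  · rfl

lemma coe_sign_intCast_units (u : ℤˣ) :
    ((SignType.sign ((u : ℤ) : R) : SignType) : R) = ((u : ℤ) : R) := by
  obtain rfl | rfl := Int.units_eq_one_or u <;> simp

end Signs

section PointwiseLE

variable {α : Type*} [PartialOrder α] [WellFoundedLT α]

lemma eq_id_of_injective_of_le_id {f : α → α} (hf : Function.Injective f)
    (hle : f ≤ id) : f = id := by
  funext a
  induction a using WellFoundedLT.induction with
  | ind a ih =>
    by_contra hne
    exact hne (hf (ih (f a) ((hle a).lt_of_ne hne)))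

lemma perm_eq_of_le {σ τ : Equiv.Perm α} (hle : ∀ a, σ a ≤ τ a) : σ = τ := by
  have hid : σ ∘ τ.symm = id :=
    eq_id_of_injective_of_le_id (σ.injective.comp τ.symm.injective) fun a => by
      simpa using hle (τ.symm a)
  ext a
  simpa using congrFun hid (τ a)

end PointwiseLE

section Bruhat

variable {ι R K : Type*} [Fintype ι] [LinearOrder ι]

lemma exists_eq_mul_signedPermMatrix [Ring R] [LinearOrder R] [IsStrictOrderedRing R]
    {W : Matrix ι ι R} {σ : Equiv.Perm ι} (hW : ∀ j, IsLastNonzero (W.col j) (σ j)) :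
    ∃ (U : Matrix ι ι R) (ε : ι → ℤˣ),
      IsPosUpperTriangular U ∧ W = U * signedPermMatrix R σ ε := by
  choose ε hε using fun j => exists_intCast_units_mul_pos (hW j).1
  let U : Matrix ι ι R := of fun i k => W i (σ.symm k) * ((ε (σ.symm k) : ℤ) : R)
  have hU : U.IsUpperTriangular := fun i k hik => by
    have hzero : W i (σ.symm k) = 0 := (hW (σ.symm k)).2 i (by simpa using hik)
    simp [U, hzero]
  refine ⟨U, ε, ⟨hU, fun k => by simpa [U] using hε (σ.symm k)⟩, ?_⟩
  ext i j
  simp only [mul_signedPermMatrix_apply, U, of_apply, Equiv.symm_apply_apply, mul_assoc,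
    intCast_units_mul_self, mul_one]

lemma signedPermMatrix_eq_of_mul_eq_mul [Ring R] [LinearOrder R] [IsStrictOrderedRing R]
    {σ τ : Equiv.Perm ι} {ε δ : ι → ℤˣ} {U V : Matrix ι ι R}
    (hU : IsPosUpperTriangular U) (hV : IsPosUpperTriangular V)
    (h : signedPermMatrix R σ ε * U = V * signedPermMatrix R τ δ) :
    signedPermMatrix R σ ε = signedPermMatrix R τ δ := by
  have hentry (j) : ((ε j : ℤ) : R) * U j j = V (σ j) (τ j) * ((δ j : ℤ) : R) := by
    rw [← signedPermMatrix_mul_apply, h, mul_signedPermMatrix_apply]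
  have hle (j) : σ j ≤ τ j := by
    by_contra! hlt
    have hzero := hentry j
    rw [hV.isUpperTriangular hlt, zero_mul] at hzero
    simp [(hU.diag_pos j).ne'] at hzero
  obtain rfl := perm_eq_of_le hle
  have hsigns : ε = δ := funext fun j =>
    units_eq_of_intCast_mul_eq_mul (hU.diag_pos j) (hV.diag_pos _) (hentry j)
  rw [hsigns]

lemma coe_sign_det_mul_signedPermMatrix_mul [CommRing R] [LinearOrder R]
    [IsStrictOrderedRing R] {U V : Matrix ι ι R} (hU : IsPosUpperTriangular U)
    (hV : IsPosUpperTriangular V) (σ : Equiv.Perm ι) (ε : ι → ℤˣ) :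
    ((SignType.sign (U * signedPermMatrix R σ ε * V).det : SignType) : R) =
      (signedPermMatrix R σ ε).det := by
  rw [det_mul, det_mul, sign_mul, sign_mul, sign_pos hU.det_pos, sign_pos hV.det_pos, one_mul,
    mul_one, det_signedPermMatrix, coe_sign_intCast_units]

variable [Field K] [LinearOrder K] [IsStrictOrderedRing K]

lemma exists_eq_mul_signedPermMatrix_mul {A : Matrix ι ι K} (hA : A.det ≠ 0) :
    ∃ (σ : Equiv.Perm ι) (ε : ι → ℤˣ) (U V : Matrix ι ι K),
      IsPosUpperTriangular U ∧ IsPosUpperTriangular V ∧ A = U * signedPermMatrix K σ ε * V := by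
  obtain ⟨V, σ, hV, hV_diag, hAV⟩ := exists_unitriangular_mul_isLastNonzero hA
  obtain ⟨U, ε, hU, hAVU⟩ := exists_eq_mul_signedPermMatrix hAV
  have hV_pos : IsPosUpperTriangular V := ⟨hV, fun j => hV_diag j ▸ one_pos⟩
  refine ⟨σ, ε, U, V⁻¹, hU, hV_pos.inv, ?_⟩
  rw [← hAVU, mul_nonsing_inv_cancel_right _ _ hV_pos.isUnit_det]

lemma signedPermMatrix_eq_of_mul_mul_eq {σ τ : Equiv.Perm ι} {ε δ : ι → ℤˣ}
    {U V U' V' : Matrix ι ι K} (hU : IsPosUpperTriangular U) (hV : IsPosUpperTriangular V)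
    (hU' : IsPosUpperTriangular U') (hV' : IsPosUpperTriangular V')
    (h : U * signedPermMatrix K σ ε * V = U' * signedPermMatrix K τ δ * V') :
    signedPermMatrix K σ ε = signedPermMatrix K τ δ := by
  refine signedPermMatrix_eq_of_mul_eq_mul (hV.mul hV'.inv) (hU.inv.mul hU') ?_
  calc signedPermMatrix K σ ε * (V * V'⁻¹)
      = U⁻¹ * (U * signedPermMatrix K σ ε * V) * V'⁻¹ := by
        simp only [mul_assoc, nonsing_inv_mul_cancel_left _ _ hU.isUnit_det]
    _ = U⁻¹ * (U' * signedPermMatrix K τ δ * V') * V'⁻¹ := by rw [h]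
    _ = U⁻¹ * U' * signedPermMatrix K τ δ := by
        simp only [mul_assoc, mul_nonsing_inv _ hV'.isUnit_det, mul_one]

theorem bruhat_decomposition_SO_general {A : Matrix ι ι K} (hA : A.det ≠ 0) :
    ∃! P : Matrix ι ι K, (∃ σ ε, P = signedPermMatrix K σ ε) ∧
      P.det = (SignType.sign A.det : SignType) ∧
        ∃ U₁ U₂ : Matrix ι ι K,
          IsPosUpperTriangular U₁ ∧ IsPosUpperTriangular U₂ ∧ A = U₁ * P * U₂ := by
  obtain ⟨σ, ε, U, V, hU, hV, rfl⟩ := exists_eq_mul_signedPermMatrix_mul hA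
  refine ⟨signedPermMatrix K σ ε, ⟨⟨σ, ε, rfl⟩,
    (coe_sign_det_mul_signedPermMatrix_mul hU hV σ ε).symm, U, V, hU, hV, rfl⟩, ?_⟩
  rintro _ ⟨⟨τ, δ, rfl⟩, -, U', V', hU', hV', h⟩
  exact (signedPermMatrix_eq_of_mul_mul_eq hU hV hU' hV' h).symm

end Bruhat

/-- **Bruhat decomposition for `SO_{n+1}`**: every `Q ∈ SO_{n+1}` lies in the Bruhat cell of a
unique signed permutation matrix of determinant one. -/
theorem bruhat_decomposition_SO (n : ℕ) (hn : 1 ≤ n)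
    (Q : Matrix (Fin (n+1)) (Fin (n+1)) ℝ) (hQ : IsSpecialOrthogonal Q) :
    ∃! P : Matrix (Fin (n+1)) (Fin (n+1)) ℝ,
      IsSignedPerm P ∧ P.det = 1 ∧
        ∃ U₁ U₂ : Matrix (Fin (n+1)) (Fin (n+1)) ℝ,
          IsUpperPos U₁ ∧ IsUpperPos U₂ ∧ Q = U₁ * P * U₂ := by
  simpa only [isSignedPerm_iff, isUpperPos_iff, hQ.2, sign_one, SignType.coe_one] using
    bruhat_decomposition_SO_general (A := Q) (by simp [hQ.2])
end

section
/- Let n ≥ 2 and let Γ : [0,1] → SO_{n+1} be a smooth curve with Γ(0) = I. Then the logarithmic derivative Γ(t)⁻¹Γ'(t) belongs to 𝔍_{n+1} for every t ∈ [0,1] if and only if there exists a smooth curve γ : [0,1] → S^n ⊂ ℝ^{n+1} with det(γ(t), γ'(t), …, γ^{(n)}(t)) > 0 for all t ∈ [0,1] whose Frenet frame curve F_γ equals Γ. In that case γ(t) = Γ(t)e₁, where e₁ is the first standard basis vector of ℝ^{n+1}. -/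
open Matrix Set

/-- Membership in `𝔍`: skew-symmetric tridiagonal matrices with positive subdiagonal. -/
def MemJ {m : ℕ} (M : Matrix (Fin m) (Fin m) ℝ) : Prop :=
  Mᵀ = -M ∧ (∀ i j : Fin m, (i : ℕ) + 1 < (j : ℕ) → M i j = 0) ∧
    ∀ i j : Fin m, (i : ℕ) = (j : ℕ) + 1 → 0 < M i j

/-- Entrywise derivative of a matrix-valued curve. -/
noncomputable def matDeriv {m : ℕ} (Γ : ℝ → Matrix (Fin m) (Fin m) ℝ) (t : ℝ) :
    Matrix (Fin m) (Fin m) ℝ :=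
  Matrix.of fun i j => deriv (fun s => Γ s i j) t

/-- The matrix whose `j`-th column is the `j`-th derivative of the curve `γ` at `t`. -/
noncomputable def derivMat (m : ℕ) (γ : ℝ → Fin m → ℝ) (t : ℝ) :
    Matrix (Fin m) (Fin m) ℝ :=
  Matrix.of fun i j => iteratedDeriv (j : ℕ) γ t i

/- In the moving frame `Γ` the derivatives of `γ` have coordinate vectors `cⱼ = Γᵀ γ⁽ʲ⁾`, and
differentiating `γ⁽ʲ⁾ = Γ cⱼ` gives the structure equation `cⱼ₊₁ = cⱼ' + A cⱼ` with `A = Γ⁻¹Γ'`.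
In a coordinate of `cⱼ` that vanishes along the curve it reduces to `cⱼ₊₁ = A cⱼ`. Since `A` is
skew-symmetric, it lies in `𝔍` iff it is upper Hessenberg with positive subdiagonal. Such an `A`
moves the last nonzero coordinate down by one and keeps it positive, so `c₀ = e₁` makes
`C = (c₀ | c₁ | ⋯)` upper triangular with positive diagonal. Conversely, if `C` is of that form then
its columns say that `A C` is Hessenberg with positive subdiagonal, and so is `A = (A C) C⁻¹`. -/

lemma mul_apply_self_of_isUpperTriangular_s2 {ι R : Type*} [Fintype ι] [LinearOrder ι]
    [NonUnitalNonAssocSemiring R] {A B : Matrix ι ι R} (hA : A.IsUpperTriangular)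
    (hB : B.IsUpperTriangular) (i : ι) : (A * B) i i = A i i * B i i := by
  refine Fintype.sum_eq_single i fun l hli => ?_
  rcases lt_or_gt_of_ne hli with hl | hl
  · exact mul_eq_zero_of_left (hA hl) _
  · exact mul_eq_zero_of_right _ (hB hl)

section Pivot

variable {m : ℕ} {k : ℕ} {v : Fin m → ℝ} {H U M : Matrix (Fin m) (Fin m) ℝ}

/-- The last nonzero coordinate of `v` has index `k` and is positive. The index is a natural number
so that `k + 1` makes sense without a bound; nothing is required if `m ≤ k`. -/
def HasPosPivot (k : ℕ) (v : Fin m → ℝ) : Prop :=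
  (∀ i : Fin m, k < i → v i = 0) ∧ ∀ i : Fin m, (i : ℕ) = k → 0 < v i

/-- Upper Hessenberg matrices with positive subdiagonal, described through their columns. -/
def IsHessenbergPos (H : Matrix (Fin m) (Fin m) ℝ) : Prop :=
  ∀ j : Fin m, HasPosPivot (j + 1) (H.col j)

lemma hasPosPivot_single (j : Fin m) : HasPosPivot j (Pi.single j 1 : Fin m → ℝ) := by
  refine ⟨fun i hi => Pi.single_eq_of_ne (Fin.ne_of_gt hi) 1, fun i hi => ?_⟩
  rw [Fin.ext hi, Pi.single_eq_same]
  exact one_pos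

lemma isUpperPos_iff_hasPosPivot_col : IsUpperPos U ↔ ∀ j : Fin m, HasPosPivot j (U.col j) := by
  refine ⟨fun h j => ⟨fun i hij => h.1 i j hij, fun i hij => ?_⟩,
    fun h => ⟨fun i j hij => (h j).1 i hij, fun i => (h i).2 i rfl⟩⟩
  obtain rfl := Fin.ext hij
  exact h.2 i

lemma IsHessenbergPos.mulVec_apply_of_lt (hH : IsHessenbergPos H) (hv : HasPosPivot k v)
    {i j : Fin m} (hj : (j : ℕ) = k) (hi : k < i) : (H *ᵥ v) i = H i j * v j := by
  refine Fintype.sum_eq_single j fun l hlj => ?_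
  rcases lt_or_gt_of_ne (Fin.val_ne_of_ne hlj) with hl | hl
  · exact mul_eq_zero_of_left ((hH l).1 i (by omega)) _
  · exact mul_eq_zero_of_right _ (hv.1 l (by omega))

lemma IsHessenbergPos.hasPosPivot_mulVec (hH : IsHessenbergPos H) (hv : HasPosPivot k v) :
    HasPosPivot (k + 1) (H *ᵥ v) := by
  refine ⟨fun i hi => ?_, fun i hi => ?_⟩ <;>
    rw [hH.mulVec_apply_of_lt hv (j := ⟨k, by omega⟩) rfl (by omega)]
  · exact mul_eq_zero_of_left ((hH _).1 i hi) _
  · exact mul_pos ((hH _).2 i hi) (hv.2 _ rfl)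

lemma IsHessenbergPos.mul_isUpperPos (hH : IsHessenbergPos H) (hU : IsUpperPos U) :
    IsHessenbergPos (H * U) :=
  fun j => hH.hasPosPivot_mulVec (isUpperPos_iff_hasPosPivot_col.1 hU j)

lemma IsUpperPos.isUpperTriangular (hU : IsUpperPos U) : U.IsUpperTriangular :=
  fun i j hij => hU.1 i j hij

lemma IsUpperPos.det_pos (hU : IsUpperPos U) : 0 < U.det := by
  rw [det_of_isUpperTriangular hU.isUpperTriangular]
  exact Finset.prod_pos fun i _ => hU.2 i

lemma IsUpperPos.inv (hU : IsUpperPos U) : IsUpperPos U⁻¹ := by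
  have hdet : IsUnit U.det := hU.det_pos.ne'.isUnit
  have : Invertible U := U.invertibleOfIsUnitDet hdet
  have hinv : U⁻¹.IsUpperTriangular := blockTriangular_inv_of_blockTriangular hU.isUpperTriangular
  refine ⟨fun i j hij => hinv hij, fun i => ?_⟩
  have hdiag : U i i * U⁻¹ i i = 1 := by
    rw [← mul_apply_self_of_isUpperTriangular_s2 hU.isUpperTriangular hinv, mul_nonsing_inv U hdet,
      one_apply_eq]
  exact pos_of_mul_pos_right (hdiag ▸ one_pos) (hU.2 i).le

lemma memJ_iff : MemJ M ↔ Mᵀ = -M ∧ IsHessenbergPos M := by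
  refine and_congr_right fun hM => ?_
  have hskew (i j : Fin m) : M j i = -M i j := congrFun₂ hM i j
  refine ⟨fun h j => ⟨fun i hij => ?_, fun i hij => h.2 i j hij⟩,
    fun h => ⟨fun i j hij => ?_, fun i j hij => (h j).2 i hij⟩⟩
  · rw [col_apply, hskew j i, h.1 j i hij, neg_zero]
  · rw [hskew j i, ← col_apply M, (h i).1 j hij, neg_zero]

end Pivot

section Orthogonal

variable {m n : ℕ}

lemma exists_isUpperPos_eq_mul_iff {Q D : Matrix (Fin m) (Fin m) ℝ} (hQ : Qᵀ * Q = 1) :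
    (∃ R, IsUpperPos R ∧ D = Q * R) ↔ IsUpperPos (Qᵀ * D) := by
  refine ⟨?_, fun h => ⟨Qᵀ * D, h, ?_⟩⟩
  · rintro ⟨R, hR, rfl⟩
    rwa [← Matrix.mul_assoc, hQ, Matrix.one_mul]
  · rw [← Matrix.mul_assoc, mul_eq_one_comm.1 hQ, Matrix.one_mul]

lemma transpose_mulVec_col_eq_single {Q : Matrix (Fin m) (Fin m) ℝ} (hQ : Qᵀ * Q = 1)
    (j : Fin m) : Qᵀ *ᵥ Q.col j = Pi.single j 1 := by
  rw [← mulVec_single_one Q, mulVec_mulVec, hQ, one_mulVec]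

lemma sum_sq_col_eq_one {Q : Matrix (Fin m) (Fin m) ℝ} (hQ : Qᵀ * Q = 1) (j : Fin m) :
    ∑ i, Q i j ^ 2 = 1 := by
  simpa [mulVec, dotProduct, ← sq] using congrFun (transpose_mulVec_col_eq_single hQ j) j

lemma mul_apply_zero_of_isUpperPos {Q R : Matrix (Fin (n + 1)) (Fin (n + 1)) ℝ}
    (hQ : Qᵀ * Q = 1) (hR : IsUpperPos R) (hQR : ∑ i, (Q * R) i 0 ^ 2 = 1) (i : Fin (n + 1)) :
    (Q * R) i 0 = Q i 0 := by
  have hcol (i : Fin (n + 1)) : (Q * R) i 0 = Q i 0 * R 0 0 :=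
    Fintype.sum_eq_single 0 fun k hk =>
      mul_eq_zero_of_right _ (hR.1 k 0 (Fin.pos_iff_ne_zero.2 hk))
  have hsq : R 0 0 ^ 2 = 1 := by
    simpa only [hcol, mul_pow, ← Finset.sum_mul, sum_sq_col_eq_one hQ, one_mul] using hQR
  rw [hcol, (pow_eq_one_iff_of_nonneg (hR.2 0).le two_ne_zero).1 hsq, mul_one]

end Orthogonal

lemma eq_zero_of_hasDerivAt_of_eqOn_const {𝕜 F : Type*} [NontriviallyNormedField 𝕜]
    [NormedAddCommGroup F] [NormedSpace 𝕜 F] {s : Set 𝕜} {f : 𝕜 → F} {f' c : F} {t : 𝕜}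
    (hs : UniqueDiffWithinAt 𝕜 s t) (ht : t ∈ s) (hf : HasDerivAt f f' t)
    (hc : ∀ u ∈ s, f u = c) : f' = 0 :=
  hs.eq_deriv s hf.hasDerivWithinAt ((hasDerivWithinAt_const t s c).congr hc (hc t ht))

lemma hasDerivAt_iteratedDeriv {𝕜 F : Type*} [NontriviallyNormedField 𝕜]
    [NormedAddCommGroup F] [NormedSpace 𝕜 F] {r : WithTop ℕ∞} {j : ℕ} {γ : 𝕜 → F}
    (hγ : ContDiff 𝕜 r γ) (hj : j < r) (t : 𝕜) :
    HasDerivAt (iteratedDeriv j γ) (iteratedDeriv (j + 1) γ t) t := by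
  rw [iteratedDeriv_succ]
  exact (hγ.differentiable_iteratedDeriv j hj t).hasDerivAt

section MovingFrame

variable {m : ℕ} {s : Set ℝ} {t : ℝ} {r : WithTop ℕ∞}

/-- The logarithmic derivative `Γ⁻¹Γ'` of a matrix curve. -/
noncomputable def matLogDeriv (Γ : ℝ → Matrix (Fin m) (Fin m) ℝ) (t : ℝ) :
    Matrix (Fin m) (Fin m) ℝ :=
  (Γ t)⁻¹ * matDeriv Γ t

/-- The coordinates of `γ⁽ʲ⁾` in the moving frame `Γ`, which is meant to be orthogonal: the
transpose stands for the inverse. -/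
noncomputable def frameCoord (Γ : ℝ → Matrix (Fin m) (Fin m) ℝ) (γ : ℝ → Fin m → ℝ) (j : ℕ)
    (t : ℝ) : Fin m → ℝ :=
  (Γ t)ᵀ *ᵥ iteratedDeriv j γ t

lemma isUpperPos_transpose_mul_derivMat_iff {Γ : ℝ → Matrix (Fin m) (Fin m) ℝ}
    {γ : ℝ → Fin m → ℝ} :
    IsUpperPos ((Γ t)ᵀ * derivMat m γ t) ↔ ∀ j : Fin m, HasPosPivot j (frameCoord Γ γ j t) :=
  isUpperPos_iff_hasPosPivot_col

lemma hasDerivAt_transpose_mulVec {Γ : ℝ → Matrix (Fin m) (Fin m) ℝ} {v : ℝ → Fin m → ℝ}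
    {v' : Fin m → ℝ} (hΓ : ∀ i j, DifferentiableAt ℝ (fun u => Γ u i j) t)
    (hv : HasDerivAt v v' t) :
    HasDerivAt (fun u => (Γ u)ᵀ *ᵥ v u) ((matDeriv Γ t)ᵀ *ᵥ v t + (Γ t)ᵀ *ᵥ v') t := by
  refine hasDerivAt_pi.2 fun i => ?_
  have hsum := HasDerivAt.fun_sum (u := Finset.univ) fun k _ =>
    (hΓ k i).hasDerivAt.mul (hasDerivAt_pi.1 hv k)
  rwa [Finset.sum_add_distrib] at hsum

variable {Γ : ℝ → Matrix (Fin m) (Fin m) ℝ} (hs : UniqueDiffOn ℝ s)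
  (hΓ : ∀ i j, Differentiable ℝ fun t => Γ t i j) (hO : ∀ t ∈ s, (Γ t)ᵀ * Γ t = 1)

include hs hΓ hO

lemma matDeriv_transpose_mul (ht : t ∈ s) :
    (matDeriv Γ t)ᵀ * Γ t = -((Γ t)ᵀ * matDeriv Γ t) := by
  refine eq_neg_of_add_eq_zero_left (Matrix.ext fun i j => ?_)
  have hcol : HasDerivAt (fun u => (Γ u).col j) ((matDeriv Γ t).col j) t :=
    hasDerivAt_pi.2 fun k => (hΓ k j t).hasDerivAt
  have hcol' := hasDerivAt_pi.1 (hasDerivAt_transpose_mulVec (fun k l => hΓ k l t) hcol) i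
  exact eq_zero_of_hasDerivAt_of_eqOn_const (hs t ht) ht hcol'
    fun u hu => congrFun₂ (hO u hu) i j

lemma matLogDeriv_transpose (ht : t ∈ s) : (matLogDeriv Γ t)ᵀ = -matLogDeriv Γ t := by
  rw [matLogDeriv, inv_eq_left_inv (hO t ht), transpose_mul, transpose_transpose,
    matDeriv_transpose_mul hs hΓ hO ht]

lemma matDeriv_transpose (ht : t ∈ s) :
    (matDeriv Γ t)ᵀ = -(matLogDeriv Γ t * (Γ t)ᵀ) := by
  rw [matLogDeriv, inv_eq_left_inv (hO t ht), ← Matrix.neg_mul,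
    ← matDeriv_transpose_mul hs hΓ hO ht, Matrix.mul_assoc, mul_eq_one_comm.1 (hO t ht),
    Matrix.mul_one]

variable {γ : ℝ → Fin m → ℝ} {j : ℕ} (hγ : ContDiff ℝ r γ)

include hγ

lemma hasDerivAt_frameCoord (hj : j < r) (ht : t ∈ s) :
    HasDerivAt (frameCoord Γ γ j)
      (frameCoord Γ γ (j + 1) t - matLogDeriv Γ t *ᵥ frameCoord Γ γ j t) t := by
  have hderiv := hasDerivAt_transpose_mulVec (fun k l => hΓ k l t)
    (hasDerivAt_iteratedDeriv hγ hj t)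
  rwa [matDeriv_transpose hs hΓ hO ht, neg_mulVec, ← mulVec_mulVec, neg_add_eq_sub] at hderiv

lemma frameCoord_succ_apply_of_eq_zero (hj : j < r) {i : Fin m}
    (hi : ∀ u ∈ s, frameCoord Γ γ j u i = 0) (ht : t ∈ s) :
    frameCoord Γ γ (j + 1) t i = (matLogDeriv Γ t *ᵥ frameCoord Γ γ j t) i :=
  sub_eq_zero.1 <| eq_zero_of_hasDerivAt_of_eqOn_const (hs t ht) ht
    (hasDerivAt_pi.1 (hasDerivAt_frameCoord hs hΓ hO hγ hj ht) i) hi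

lemma hasPosPivot_frameCoord_succ_iff (hj : j < r)
    (hpivot : ∀ u ∈ s, HasPosPivot j (frameCoord Γ γ j u)) (ht : t ∈ s) :
    HasPosPivot (j + 1) (frameCoord Γ γ (j + 1) t) ↔
      HasPosPivot (j + 1) (matLogDeriv Γ t *ᵥ frameCoord Γ γ j t) := by
  have hsucc (i : Fin m) (hi : j < i) :=
    frameCoord_succ_apply_of_eq_zero hs hΓ hO hγ hj (fun u hu => (hpivot u hu).1 i hi) ht
  refine and_congr (forall₂_congr fun i hi => ?_) (forall₂_congr fun i hi => ?_) <;>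
    rw [hsucc i (by omega)]

lemma hasPosPivot_frameCoord (hA : ∀ t ∈ s, IsHessenbergPos (matLogDeriv Γ t))
    (hzero : ∀ t ∈ s, HasPosPivot 0 (frameCoord Γ γ 0 t)) (hj : j ≤ r) :
    ∀ t ∈ s, HasPosPivot j (frameCoord Γ γ j t) := by
  induction j with
  | zero => exact hzero
  | succ j ih =>
    have hjr : (j : WithTop ℕ∞) < r := lt_of_lt_of_le (mod_cast j.lt_succ_self) hj
    have hpivot := ih hjr.le
    exact fun t ht => (hasPosPivot_frameCoord_succ_iff hs hΓ hO hγ hjr hpivot ht).2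
      ((hA t ht).hasPosPivot_mulVec (hpivot t ht))

-- The last column of a Hessenberg matrix is unconstrained, so derivatives up to order `m - 1`
-- suffice.
lemma isHessenbergPos_matLogDeriv (hr : (m - 1 : ℕ) ≤ r)
    (hC : ∀ t ∈ s, IsUpperPos ((Γ t)ᵀ * derivMat m γ t)) (ht : t ∈ s) :
    IsHessenbergPos (matLogDeriv Γ t) := by
  have hpivot (j : Fin m) : ∀ u ∈ s, HasPosPivot j (frameCoord Γ γ j u) :=
    fun u hu => isUpperPos_transpose_mul_derivMat_iff.1 (hC u hu) j
  have hmul : IsHessenbergPos (matLogDeriv Γ t * ((Γ t)ᵀ * derivMat m γ t)) := by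
    intro j
    by_cases hjm : (j : ℕ) + 1 < m
    · have hjr : (j : WithTop ℕ∞) < r := lt_of_lt_of_le (mod_cast Nat.lt_sub_of_add_lt hjm) hr
      exact (hasPosPivot_frameCoord_succ_iff hs hΓ hO hγ hjr (hpivot j) ht).1
        (hpivot ⟨j + 1, hjm⟩ t ht)
    · exact ⟨fun i hi => by omega, fun i hi => by omega⟩
  have hdet : IsUnit ((Γ t)ᵀ * derivMat m γ t).det := (hC t ht).det_pos.ne'.isUnit
  simpa only [mul_nonsing_inv_cancel_right _ _ hdet] using hmul.mul_isUpperPos (hC t ht).inv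

end MovingFrame

/-- `γ` is a `C^r` curve, spherical and positively locally convex on `s`, whose Frenet frame is `Γ`
on `s`. The Gram–Schmidt decomposition is unique, so `F_γ = Γ` is expressed by asking that `Γ` be
the orthogonal factor of one decomposition. -/
def HasFrenetFrameOn {m : ℕ} (r : WithTop ℕ∞) (s : Set ℝ) (γ : ℝ → Fin m → ℝ)
    (Γ : ℝ → Matrix (Fin m) (Fin m) ℝ) : Prop :=
  ContDiff ℝ r γ ∧
  (∀ t ∈ s, ∑ x, γ t x ^ 2 = 1) ∧
  (∀ t ∈ s, 0 < (derivMat m γ t).det) ∧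
  ∀ t ∈ s, ∃ R, IsUpperPos R ∧ derivMat m γ t = Γ t * R

section FrenetFrame

variable {m n : ℕ} {r : WithTop ℕ∞} {s : Set ℝ}

lemma HasFrenetFrameOn.apply_eq {Γ : ℝ → Matrix (Fin (n + 1)) (Fin (n + 1)) ℝ}
    {γ : ℝ → Fin (n + 1) → ℝ} (h : HasFrenetFrameOn r s γ Γ) (hO : ∀ t ∈ s, (Γ t)ᵀ * Γ t = 1)
    {t : ℝ} (ht : t ∈ s) (i : Fin (n + 1)) : γ t i = Γ t i 0 := by
  obtain ⟨-, hnorm, -, hQR⟩ := h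
  obtain ⟨R, hR, hγR⟩ := hQR t ht
  have hγ (i : Fin (n + 1)) : γ t i = (Γ t * R) i 0 := by rw [← hγR]; simp [derivMat]
  rw [hγ, mul_apply_zero_of_isUpperPos (hO t ht) hR (by simpa only [← hγ] using hnorm t ht)]

lemma HasFrenetFrameOn.memJ_matLogDeriv {Γ : ℝ → Matrix (Fin m) (Fin m) ℝ} {γ : ℝ → Fin m → ℝ}
    (h : HasFrenetFrameOn r s γ Γ) (hs : UniqueDiffOn ℝ s)
    (hΓ : ∀ i j, Differentiable ℝ fun t => Γ t i j) (hO : ∀ t ∈ s, (Γ t)ᵀ * Γ t = 1)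
    (hr : (m - 1 : ℕ) ≤ r) {t : ℝ} (ht : t ∈ s) : MemJ (matLogDeriv Γ t) := by
  obtain ⟨hγ, -, -, hQR⟩ := h
  exact memJ_iff.2 ⟨matLogDeriv_transpose hs hΓ hO ht, isHessenbergPos_matLogDeriv hs hΓ hO hγ hr
    (fun u hu => (exists_isUpperPos_eq_mul_iff (hO u hu)).1 (hQR u hu)) ht⟩

lemma hasFrenetFrameOn_col_zero {Γ : ℝ → Matrix (Fin (n + 1)) (Fin (n + 1)) ℝ}
    (hs : UniqueDiffOn ℝ s) (hr : 1 ≤ r) (hnr : n ≤ r)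
    (hΓ : ∀ i j, ContDiff ℝ r fun t => Γ t i j) (hSO : ∀ t ∈ s, IsSpecialOrthogonal (Γ t))
    (hA : ∀ t ∈ s, IsHessenbergPos (matLogDeriv Γ t)) :
    HasFrenetFrameOn r s (fun t => (Γ t).col 0) Γ := by
  have hO (t : ℝ) (ht : t ∈ s) : (Γ t)ᵀ * Γ t = 1 := (hSO t ht).1
  have hdiff (i j : Fin (n + 1)) : Differentiable ℝ fun t => Γ t i j :=
    (hΓ i j).differentiable (zero_lt_one.trans_le hr).ne'
  have hcol : ContDiff ℝ r fun t => (Γ t).col 0 := contDiff_pi.2 fun i => hΓ i 0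
  have hzero (t : ℝ) (ht : t ∈ s) :
      HasPosPivot 0 (frameCoord Γ (fun t => (Γ t).col 0) 0 t) := by
    rw [frameCoord, iteratedDeriv_zero, transpose_mulVec_col_eq_single (hO t ht)]
    exact hasPosPivot_single 0
  have hQR (t : ℝ) (ht : t ∈ s) :
      ∃ R, IsUpperPos R ∧ derivMat (n + 1) (fun t => (Γ t).col 0) t = Γ t * R := by
    rw [exists_isUpperPos_eq_mul_iff (hO t ht), isUpperPos_transpose_mul_derivMat_iff]
    intro j
    have hjr : (j : WithTop ℕ∞) ≤ r := le_trans (mod_cast j.is_le) hnr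
    exact hasPosPivot_frameCoord hs hdiff hO hcol hA hzero hjr t ht
  refine ⟨hcol, fun t ht => sum_sq_col_eq_one (hO t ht) 0, fun t ht => ?_, hQR⟩
  obtain ⟨R, hR, hγR⟩ := hQR t ht
  rw [hγR, det_mul, (hSO t ht).2, one_mul]
  exact hR.det_pos

end FrenetFrame

theorem jacobian_iff_frenet_frame_general {n : ℕ} {r : WithTop ℕ∞} {s : Set ℝ}
    (hs : UniqueDiffOn ℝ s) (hr : 1 ≤ r) (hnr : n ≤ r)
    (Γ : ℝ → Matrix (Fin (n + 1)) (Fin (n + 1)) ℝ)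
    (hΓ : ∀ i j, ContDiff ℝ r fun t => Γ t i j) (hSO : ∀ t ∈ s, IsSpecialOrthogonal (Γ t)) :
    ((∀ t ∈ s, MemJ (matLogDeriv Γ t)) ↔ ∃ γ, HasFrenetFrameOn r s γ Γ) ∧
      ∀ γ, HasFrenetFrameOn r s γ Γ → ∀ t ∈ s, ∀ i, γ t i = Γ t i 0 := by
  have hO (t : ℝ) (ht : t ∈ s) : (Γ t)ᵀ * Γ t = 1 := (hSO t ht).1
  have hdiff (i j : Fin (n + 1)) : Differentiable ℝ fun t => Γ t i j :=
    (hΓ i j).differentiable (zero_lt_one.trans_le hr).ne'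
  refine ⟨⟨fun hJ => ?_, ?_⟩, fun γ hγ t ht => hγ.apply_eq hO ht⟩
  · exact ⟨_, hasFrenetFrameOn_col_zero hs hr hnr hΓ hSO fun t ht => (memJ_iff.1 (hJ t ht)).2⟩
  · rintro ⟨γ, hγ⟩ t ht
    exact hγ.memJ_matLogDeriv hs hdiff hO hnr ht

/-- A smooth curve `Γ : [0,1] → SO_{n+1}` with `Γ 0 = I` is Jacobian (logarithmic derivative in
`𝔍`) iff it is the Frenet frame curve of a positive locally convex curve `γ : [0,1] → Sⁿ`;
in that case `γ t = Γ t e₁`. -/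
theorem jacobian_iff_frenet_frame (n : ℕ) (hn : 2 ≤ n)
    (Γ : ℝ → Matrix (Fin (n+1)) (Fin (n+1)) ℝ)
    (hsm : ∀ i j : Fin (n+1), ContDiff ℝ (⊤ : ℕ∞) fun t => Γ t i j)
    (h0 : Γ 0 = 1)
    (hSO : ∀ t ∈ Icc (0 : ℝ) 1, IsSpecialOrthogonal (Γ t)) :
    ((∀ t ∈ Icc (0 : ℝ) 1, MemJ ((Γ t)⁻¹ * matDeriv Γ t)) ↔
      (∃ γ : ℝ → Fin (n+1) → ℝ,
        ContDiff ℝ (⊤ : ℕ∞) γ ∧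
        (∀ t ∈ Icc (0 : ℝ) 1, ∑ x, γ t x ^ 2 = 1) ∧
        (∀ t ∈ Icc (0 : ℝ) 1, 0 < (derivMat (n+1) γ t).det) ∧
        (∀ t ∈ Icc (0 : ℝ) 1, ∃ R, IsUpperPos R ∧ derivMat (n+1) γ t = Γ t * R))) ∧
    (∀ γ : ℝ → Fin (n+1) → ℝ,
        ContDiff ℝ (⊤ : ℕ∞) γ →
        (∀ t ∈ Icc (0 : ℝ) 1, ∑ x, γ t x ^ 2 = 1) →
        (∀ t ∈ Icc (0 : ℝ) 1, 0 < (derivMat (n+1) γ t).det) →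
        (∀ t ∈ Icc (0 : ℝ) 1, ∃ R, IsUpperPos R ∧ derivMat (n+1) γ t = Γ t * R) →
        ∀ t ∈ Icc (0 : ℝ) 1, ∀ i, γ t i = Γ t i 0) := by
  obtain ⟨hiff, huniq⟩ := jacobian_iff_frenet_frame_general (uniqueDiffOn_Icc zero_lt_one)
    (mod_cast le_top) (mod_cast le_top) Γ hsm hSO
  exact ⟨hiff, fun γ hγ hnorm hdet hQR => huniq γ ⟨hγ, hnorm, hdet, hQR⟩⟩
end

section
/- Let γ : [0,1] → ℝ⁴ be a smooth curve with ‖γ(t)‖ = 1 and ‖γ'(t)‖ = 1 for all t, such that γ(t), γ'(t), γ''(t) are linearly independent for all t. Let n_γ(t) = w(t)/‖w(t)‖ where w(t) = γ''(t) − ⟨γ''(t), γ(t)⟩γ(t) − ⟨γ''(t), γ'(t)⟩γ'(t), let b_γ(t) be the unique unit vector of ℝ⁴ orthogonal to γ(t), γ'(t), n_γ(t) with det(γ(t), γ'(t), n_γ(t), b_γ(t)) = 1, and set κ_γ(t) = ⟨γ''(t), n_γ(t)⟩ and τ_γ(t) = ⟨b_γ(t), n_γ'(t)⟩. Then det(γ(t),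 γ'(t), γ''(t), γ'''(t)) = κ_γ(t)² τ_γ(t) for all t. In particular, γ is positive locally convex (det(γ(t), γ'(t), γ''(t), γ'''(t)) > 0 for all t) if and only if τ_γ(t) > 0 for all t. -/
open Set

/-- Euclidean norm on `ℝ⁴` (as `Fin 4 → ℝ`). -/
noncomputable def enorm4 (v : Fin 4 → ℝ) : ℝ := Real.sqrt (∑ x, v x ^ 2)

/-- Determinant of the `4×4` matrix with columns `u, v, w, z`. -/
noncomputable def det4 (u v w z : Fin 4 → ℝ) : ℝ :=
  (Matrix.of fun i j : Fin 4 => ![u, v, w, z] j i).det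

/-!
Write `γ'' = w + a γ + c γ'` and `n = w / ‖w‖`. A unit vector `b` orthogonal to `γ, γ', n` is also
orthogonal to `γ''`, so the functional `det (γ, γ', n, ·)` is `⟨b, ·⟩` and
`det (γ, γ', γ'', γ''') = ‖w‖ ⟨b, γ'''⟩`. The derivatives of `a`, `c` and `‖w‖⁻¹` multiply vectors
orthogonal to `b`, hence `τ = ⟨b, n'⟩ = ‖w‖⁻¹ ⟨b, w'⟩ = ‖w‖⁻¹ ⟨b, γ'''⟩`, and the determinant is
`‖w‖² τ`. For an arc-length parametrized curve on the sphere and the orthogonal component `w` of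
`γ''`, moreover `κ = ‖w‖`.
-/

section Determinants

open Matrix

variable {ι R : Type*} [Fintype ι] [DecidableEq ι] [CommRing R]

theorem det_eq_zero_of_vecMul_eq_zero {A : Matrix ι ι R} {b : ι → R} (hb : b ⬝ᵥ b = 1)
    (hA : b ᵥ* A = 0) : A.det = 0 :=
  calc
    A.det = (b ᵥ* (A.det • 1)) ⬝ᵥ b := by
      rw [vecMul_smul, vecMul_one, smul_dotProduct, hb, smul_eq_mul, mul_one]
    _ = 0 := by rw [← mul_adjugate, ← vecMul_vecMul, hA, zero_vecMul, zero_dotProduct]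

theorem det_updateCol_eq_dotProduct_mul (A : Matrix ι ι R) (q : ι) {b : ι → R} (hb : b ⬝ᵥ b = 1)
    (hA : ∀ k ≠ q, b ⬝ᵥ A.col k = 0) (y : ι → R) :
    (A.updateCol q y).det = (b ⬝ᵥ y) * (A.updateCol q b).det := by
  set z := y - (b ⬝ᵥ y) • b with hz
  have hbz : b ⬝ᵥ z = 0 := by
    rw [hz, dotProduct_sub, dotProduct_smul, hb, smul_eq_mul, mul_one, sub_self]
  have hdet : (A.updateCol q z).det = 0 := by
    refine det_eq_zero_of_vecMul_eq_zero hb (funext fun k => ?_)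
    obtain rfl | hk := eq_or_ne k q
    · simpa [vecMul, dotProduct] using hbz
    · simpa [vecMul, dotProduct, hk] using hA k hk
  have hy : y = z + (b ⬝ᵥ y) • b := (sub_add_cancel _ _).symm
  conv_lhs => rw [hy, det_updateCol_add, hdet, zero_add, det_updateCol_smul]

theorem det4_eq_dotProduct_mul_det4 {u v w b : Fin 4 → ℝ} (hb : b ⬝ᵥ b = 1) (hu : b ⬝ᵥ u = 0)
    (hv : b ⬝ᵥ v = 0) (hw : b ⬝ᵥ w = 0) (y : Fin 4 → ℝ) :
    det4 u v w y = (b ⬝ᵥ y) * det4 u v w b := by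
  have det4_eq_updateCol (z : Fin 4 → ℝ) : det4 u v w z =
      ((of fun i j : Fin 4 => ![u, v, w, b] j i).updateCol 3 z).det := by
    rw [det4]
    congr 1
    ext i j
    fin_cases j <;> rfl
  rw [det4_eq_updateCol y, det4_eq_updateCol b]
  refine det_updateCol_eq_dotProduct_mul _ 3 hb (fun k hk => ?_) y
  fin_cases k
  exacts [hu, hv, hw, absurd rfl hk]

theorem det4_smul_sub_sub (u v x y : Fin 4 → ℝ) (r a c : ℝ) :
    det4 u v (r • (x - a • u - c • v)) y = r * det4 u v x y := by
  let A : Matrix (Fin 4) (Fin 4) ℝ := of fun i j => ![u, v, x, y] j i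
  have hcol : r • (x - a • u - c • v) = fun k => ∑ i, ![-(r * a), -(r * c), r, 0] i • A k i := by
    ext k
    simp only [A, of_apply, Fin.sum_univ_four, Pi.smul_apply, Pi.sub_apply, smul_eq_mul, cons_val]
    ring
  calc
    det4 u v (r • (x - a • u - c • v)) y = (A.updateCol 2 (r • (x - a • u - c • v))).det := by
      rw [det4]
      congr 1
      ext i j
      fin_cases j <;> rfl
    _ = r * det4 u v x y := by
      rw [hcol, det_updateCol_sum]
      rfl

theorem ne_zero_of_det4_smul_ne_zero {u v w z : Fin 4 → ℝ} {r : ℝ}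
    (h : det4 u v (r • w) z ≠ 0) : r ≠ 0 := by
  rintro rfl
  rw [zero_smul] at h
  exact h (det_eq_zero_of_column_eq_zero 2 fun _ => rfl)

end Determinants

section DotProduct

variable {ι : Type*} [Fintype ι]

theorem differentiable_dotProduct {f g : ℝ → ι → ℝ} (hf : Differentiable ℝ f)
    (hg : Differentiable ℝ g) : Differentiable ℝ fun t => f t ⬝ᵥ g t := by
  unfold dotProduct
  fun_prop

theorem dotProduct_deriv_eq_zero_of_sum_sq_eq {f : ℝ → ι → ℝ} {r : ℝ} (hf : Differentiable ℝ f)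
    (h : ∀ t, ∑ i, f t i ^ 2 = r) (t : ℝ) : f t ⬝ᵥ deriv f t = 0 := by
  have hd : HasDerivAt (fun s => ∑ i, f s i ^ 2) (∑ i, 2 * f t i * deriv f t i) t :=
    HasDerivAt.fun_sum fun i _ => by
      simpa using (hasDerivAt_pi.1 (hf t).hasDerivAt i).fun_pow 2
  simp only [h] at hd
  have hzero : 2 * (f t ⬝ᵥ deriv f t) = 0 := by
    simpa only [dotProduct, Finset.mul_sum, mul_assoc] using hd.unique (hasDerivAt_const t r)
  simpa using hzero

theorem dotProduct_deriv_smul {f : ℝ → ℝ} {w : ℝ → ι → ℝ} {b : ι → ℝ} {t : ℝ}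
    (hf : DifferentiableAt ℝ f t) (hw : DifferentiableAt ℝ w t) (hb : b ⬝ᵥ w t = 0) :
    b ⬝ᵥ deriv (f • w) t = f t * (b ⬝ᵥ deriv w t) := by
  rw [deriv_smul hf hw, dotProduct_add, dotProduct_smul, dotProduct_smul, hb, smul_zero, add_zero,
    smul_eq_mul]

theorem dotProduct_deriv_sub_smul_sub_smul {u v x : ℝ → ι → ℝ} {a c : ℝ → ℝ}
    {b u' v' x' : ι → ℝ} {t : ℝ} (hu : HasDerivAt u u' t) (hv : HasDerivAt v v' t)
    (hx : HasDerivAt x x' t) (ha : DifferentiableAt ℝ a t) (hc : DifferentiableAt ℝ c t)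
    (hbu : b ⬝ᵥ u t = 0) (hbv : b ⬝ᵥ v t = 0) (hbu' : b ⬝ᵥ u' = 0) (hbv' : b ⬝ᵥ v' = 0) :
    b ⬝ᵥ deriv (x - a • u - c • v) t = b ⬝ᵥ x' := by
  have hau := ha.smul hu.differentiableAt
  have hcv := hc.smul hv.differentiableAt
  rw [deriv_sub (hx.differentiableAt.sub hau) hcv, deriv_sub hx.differentiableAt hau,
    dotProduct_sub, dotProduct_sub, dotProduct_deriv_smul ha hu.differentiableAt hbu,
    dotProduct_deriv_smul hc hv.differentiableAt hbv, hu.deriv, hv.deriv, hx.deriv, hbu', hbv',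
    mul_zero, mul_zero, sub_zero, sub_zero]

theorem dotProduct_sub_smul_sub_smul {u v x : ι → ℝ} (hu : u ⬝ᵥ u = 1) (hv : v ⬝ᵥ v = 1)
    (huv : u ⬝ᵥ v = 0) :
    x ⬝ᵥ (x - (x ⬝ᵥ u) • u - (x ⬝ᵥ v) • v) =
      (x - (x ⬝ᵥ u) • u - (x ⬝ᵥ v) • v) ⬝ᵥ (x - (x ⬝ᵥ u) • u - (x ⬝ᵥ v) • v) := by
  simp only [dotProduct_sub, sub_dotProduct, dotProduct_smul, smul_dotProduct, smul_eq_mul, hu, hv,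
    huv, dotProduct_comm v u, dotProduct_comm u x, dotProduct_comm v x]
  ring

theorem sum_sq_eq_dotProduct (v : ι → ℝ) : ∑ x, v x ^ 2 = v ⬝ᵥ v := by
  simp only [dotProduct, pow_two]

theorem enorm4_sq (v : Fin 4 → ℝ) : enorm4 v ^ 2 = v ⬝ᵥ v := by
  rw [enorm4, Real.sq_sqrt (by positivity), sum_sq_eq_dotProduct]

theorem dotProduct_inv_enorm4_smul_eq_enorm4 {u v x w : Fin 4 → ℝ} (hu : ∑ i, u i ^ 2 = 1)
    (hv : ∑ i, v i ^ 2 = 1) (huv : u ⬝ᵥ v = 0) (hw : w = x - (x ⬝ᵥ u) • u - (x ⬝ᵥ v) • v) :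
    x ⬝ᵥ (enorm4 w)⁻¹ • w = enorm4 w := by
  rw [sum_sq_eq_dotProduct] at hu hv
  have hxw : x ⬝ᵥ w = w ⬝ᵥ w := hw ▸ dotProduct_sub_smul_sub_smul hu hv huv
  rw [dotProduct_smul, hxw, ← enorm4_sq, smul_eq_mul, pow_two, ← mul_assoc, inv_mul_mul_self]

theorem differentiableAt_enorm4 {w : ℝ → Fin 4 → ℝ} {t : ℝ} (hw : DifferentiableAt ℝ w t)
    (h : enorm4 (w t) ≠ 0) : DifferentiableAt ℝ (fun s => enorm4 (w s)) t := by
  have hsum : DifferentiableAt ℝ (fun s => ∑ x, w s x ^ 2) t := by fun_prop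
  exact hsum.sqrt fun h0 => h (by rw [enorm4, h0, Real.sqrt_zero])

end DotProduct

theorem sq_mul_det4_eq_dotProduct_deriv_smul {u v x w : ℝ → Fin 4 → ℝ} {f a c : ℝ → ℝ}
    {b x' : Fin 4 → ℝ} {t : ℝ} (hu : HasDerivAt u (v t) t) (hv : HasDerivAt v (x t) t)
    (hx : HasDerivAt x x' t) (hf : DifferentiableAt ℝ f t)
    (ha : DifferentiableAt ℝ a t) (hc : DifferentiableAt ℝ c t) (hw : w = x - a • u - c • v)
    (hb : b ⬝ᵥ b = 1) (hbu : b ⬝ᵥ u t = 0) (hbv : b ⬝ᵥ v t = 0) (hbw : b ⬝ᵥ w t = 0)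
    (hdet : det4 (u t) (v t) (f t • w t) b = 1) :
    f t ^ 2 * det4 (u t) (v t) (x t) x' = b ⬝ᵥ deriv (f • w) t := by
  have hwt : w t = x t - a t • u t - c t • v t := congrFun hw t
  have hbx : b ⬝ᵥ x t = 0 := by
    simpa [hwt, dotProduct_sub, hbu, hbv] using hbw
  have hw' : DifferentiableAt ℝ w t :=
    hw ▸ (hx.differentiableAt.sub (ha.smul hu.differentiableAt)).sub (hc.smul hv.differentiableAt)
  have hbw' : b ⬝ᵥ deriv w t = b ⬝ᵥ x' := by
    rw [hw, dotProduct_deriv_sub_smul_sub_smul hu hv hx ha hc hbu hbv hbv hbx]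
  have hbfw : b ⬝ᵥ f t • w t = 0 := by rw [dotProduct_smul, hbw, smul_zero]
  calc
    f t ^ 2 * det4 (u t) (v t) (x t) x' = f t * det4 (u t) (v t) (f t • w t) x' := by
      rw [hwt, det4_smul_sub_sub, pow_two, mul_assoc]
    _ = f t * (b ⬝ᵥ x') := by
      rw [det4_eq_dotProduct_mul_det4 hb hbu hbv hbfw, hdet, mul_one]
    _ = b ⬝ᵥ deriv (f • w) t := by rw [dotProduct_deriv_smul hf hw' hbw, hbw']

theorem differentiable_iteratedDeriv_of_contDiff_three {E : Type*} [NormedAddCommGroup E]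
    [NormedSpace ℝ E] {γ : ℝ → E} (hγ : ContDiff ℝ 3 γ) :
    Differentiable ℝ γ ∧ Differentiable ℝ (deriv γ) ∧ Differentiable ℝ (iteratedDeriv 2 γ) :=
  ⟨hγ.differentiable (by norm_num), (hγ.of_le (by norm_num)).differentiable_deriv_two,
    hγ.differentiable_iteratedDeriv 2 (by norm_num)⟩

theorem locally_convex_iff_geodesic_torsion_pos_general
    (γ w nγ bγ : ℝ → Fin 4 → ℝ) (a c τ : ℝ → ℝ)
    (hγ : ContDiff ℝ 3 γ) (ha : Differentiable ℝ a) (hc : Differentiable ℝ c)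
    (hw : ∀ t, w t = iteratedDeriv 2 γ t - a t • γ t - c t • deriv γ t)
    (hn : ∀ t, nγ t = (enorm4 (w t))⁻¹ • w t)
    (hbunit : ∀ t, ∑ x, bγ t x ^ 2 = 1)
    (hb1 : ∀ t, ∑ x, bγ t x * γ t x = 0)
    (hb2 : ∀ t, ∑ x, bγ t x * deriv γ t x = 0)
    (hb3 : ∀ t, ∑ x, bγ t x * nγ t x = 0)
    (hbdet : ∀ t, det4 (γ t) (deriv γ t) (nγ t) (bγ t) = 1)
    (hτ : ∀ t, τ t = ∑ x, bγ t x * deriv nγ t x) :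
    (∀ t, det4 (γ t) (deriv γ t) (iteratedDeriv 2 γ t) (iteratedDeriv 3 γ t)
        = enorm4 (w t) ^ 2 * τ t) ∧
    ((∀ t, 0 < det4 (γ t) (deriv γ t) (iteratedDeriv 2 γ t) (iteratedDeriv 3 γ t)) ↔
      ∀ t, 0 < τ t) := by
  obtain ⟨h0, h1, h2⟩ := differentiable_iteratedDeriv_of_contDiff_three hγ
  have hw' : Differentiable ℝ w := funext hw ▸ (h2.sub (ha.smul h0)).sub (hc.smul h1)
  have hnorm (t : ℝ) : enorm4 (w t) ≠ 0 := fun h =>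
    ne_zero_of_det4_smul_ne_zero (hn t ▸ hbdet t ▸ one_ne_zero) (inv_eq_zero.2 h)
  have hbw (t : ℝ) : bγ t ⬝ᵥ w t = 0 := by
    have hbn : bγ t ⬝ᵥ nγ t = 0 := hb3 t
    rw [hn, dotProduct_smul] at hbn
    exact (smul_eq_zero_iff_right (inv_ne_zero (hnorm t))).1 hbn
  have hdet (t : ℝ) : det4 (γ t) (deriv γ t) (iteratedDeriv 2 γ t) (iteratedDeriv 3 γ t) =
      enorm4 (w t) ^ 2 * τ t := by
    have hγ' : HasDerivAt (deriv γ) (iteratedDeriv 2 γ t) t := by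
      simpa [iteratedDeriv_succ] using (h1 t).hasDerivAt
    have hγ'' : HasDerivAt (iteratedDeriv 2 γ) (iteratedDeriv 3 γ t) t := by
      simpa [iteratedDeriv_succ] using (h2 t).hasDerivAt
    have hf := (differentiableAt_enorm4 (hw' t) (hnorm t)).inv (hnorm t)
    have hb : bγ t ⬝ᵥ bγ t = 1 := sum_sq_eq_dotProduct (bγ t) ▸ hbunit t
    have hnγ : nγ = (fun s => enorm4 (w s))⁻¹ • w := funext hn
    have hτ' : τ t = bγ t ⬝ᵥ deriv ((fun s => enorm4 (w s))⁻¹ • w) t := hnγ ▸ hτ t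
    have hsq := sq_mul_det4_eq_dotProduct_deriv_smul (h0 t).hasDerivAt hγ' hγ'' hf (ha t)
      (hc t) (funext hw) hb (hb1 t) (hb2 t) (hbw t) (hn t ▸ hbdet t)
    rwa [← hτ', Pi.inv_apply, inv_pow, inv_mul_eq_iff_eq_mul₀ (pow_ne_zero 2 (hnorm t))] at hsq
  refine ⟨hdet, forall_congr' fun t => ?_⟩
  rw [hdet t, mul_pos_iff_of_pos_left (sq_pos_of_ne_zero (hnorm t))]

/-- For an arc-length parametrized generic curve on `S³ ⊂ ℝ⁴`, with unit normal `nγ`,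
binormal `bγ`, geodesic curvature `κγ = ⟨γ'', nγ⟩` and geodesic torsion `τγ = ⟨bγ, nγ'⟩`,
one has `det(γ, γ', γ'', γ''') = κγ² τγ`; in particular `γ` is positive locally convex iff
`τγ > 0`. -/
theorem locally_convex_iff_geodesic_torsion_pos
    (γ w nγ bγ : ℝ → Fin 4 → ℝ) (κ τ : ℝ → ℝ)
    (hsm : ContDiff ℝ (⊤ : ℕ∞) γ)
    (hsph : ∀ t, ∑ x, γ t x ^ 2 = 1)
    (harc : ∀ t, ∑ x, deriv γ t x ^ 2 = 1)
    (hindep : ∀ t, LinearIndependent ℝ ![γ t, deriv γ t, iteratedDeriv 2 γ t])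
    (hw : ∀ t, w t = iteratedDeriv 2 γ t
        - (∑ x, iteratedDeriv 2 γ t x * γ t x) • γ t
        - (∑ x, iteratedDeriv 2 γ t x * deriv γ t x) • deriv γ t)
    (hn : ∀ t, nγ t = (enorm4 (w t))⁻¹ • w t)
    (hbunit : ∀ t, ∑ x, bγ t x ^ 2 = 1)
    (hb1 : ∀ t, ∑ x, bγ t x * γ t x = 0)
    (hb2 : ∀ t, ∑ x, bγ t x * deriv γ t x = 0)
    (hb3 : ∀ t, ∑ x, bγ t x * nγ t x = 0)
    (hbdet : ∀ t, det4 (γ t) (deriv γ t) (nγ t) (bγ t) = 1)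
    (hκ : ∀ t, κ t = ∑ x, iteratedDeriv 2 γ t x * nγ t x)
    (hτ : ∀ t, τ t = ∑ x, bγ t x * deriv nγ t x) :
    (∀ t, det4 (γ t) (deriv γ t) (iteratedDeriv 2 γ t) (iteratedDeriv 3 γ t)
        = κ t ^ 2 * τ t) ∧
    ((∀ t, 0 < det4 (γ t) (deriv γ t) (iteratedDeriv 2 γ t) (iteratedDeriv 3 γ t)) ↔
      ∀ t, 0 < τ t) := by
  have h3 : ContDiff ℝ 3 γ := contDiff_infty.1 hsm 3
  obtain ⟨h0, h1, h2⟩ := differentiable_iteratedDeriv_of_contDiff_three h3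
  have hκw (t : ℝ) : κ t = enorm4 (w t) := by
    rw [hκ, hn]
    exact dotProduct_inv_enorm4_smul_eq_enorm4 (hsph t) (harc t)
      (dotProduct_deriv_eq_zero_of_sum_sq_eq h0 hsph t) (hw t)
  simpa only [hκw] using locally_convex_iff_geodesic_torsion_pos_general γ w nγ bγ _ _ τ h3
    (differentiable_dotProduct h2 h0) (differentiable_dotProduct h2 h1) hw hn hbunit hb1 hb2 hb3
    hbdet hτ
end

section
/- Let Γ_l, Γ_r : [0,1] → 𝕊³ be smooth curves of unit quaternions, and for each t let Γ(t) be the 4×4 real matrix, in the basis (1, i, j, k) of ℍ ≅ ℝ⁴, of the ℝ-linear map q ↦ Γ_l(t)·q·(conjugate of Γ_r(t)); Γ(t) belongs to SO₄. Then Γ(t)⁻¹Γ'(t) belongs to 𝔔₄ for every t ∈ [0,1] if and only if there exist functions b_l, b_r, d : [0,1] → ℝ such that Γ_l(t)⁻¹Γ_l'(t) = b_l(t)·i + d(t)·k, Γ_r(t)⁻¹Γ_r'(t) = b_r(t)·i + d(t)·k, b_l(t) > b_r(t) and d(t) > 0 for every t ∈ [0,1]. -/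
open Matrix Set Quaternion

/-- Coordinates of a quaternion in the basis `(1, i, j, k)`. -/
noncomputable def quatCoord (q : Quaternion ℝ) : Fin 4 → ℝ := ![q.re, q.imI, q.imJ, q.imK]

/-- The basis `(1, i, j, k)` of `ℍ`. -/
noncomputable def quatBasis : Fin 4 → Quaternion ℝ :=
  ![1, ⟨0, 1, 0, 0⟩, ⟨0, 0, 1, 0⟩, ⟨0, 0, 0, 1⟩]

/-- The matrix, in the basis `(1, i, j, k)`, of the map `q ↦ z_l · q · z̄_r`. -/
noncomputable def pairMatrix (zl zr : Quaternion ℝ) : Matrix (Fin 4) (Fin 4) ℝ :=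
  Matrix.of fun i j => quatCoord (zl * quatBasis j * star zr) i

/-- Membership in `𝔔₄`: skew-symmetric tridiagonal `4×4` matrices whose subdiagonal
entries `(2,1)` and `(3,2)` are positive (and `(4,3)` arbitrary). -/
def MemQ4 (M : Matrix (Fin 4) (Fin 4) ℝ) : Prop :=
  Mᵀ = -M ∧ (∀ i j : Fin 4, (i : ℕ) + 1 < (j : ℕ) → M i j = 0) ∧
    0 < M 1 0 ∧ 0 < M 2 1

/-!
The matrix of `q ↦ zl * q * star zr` is multiplicative in the pair `(zl, zr)`, so the product rule
gives `Γ⁻¹ Γ'` as the matrix of `q ↦ a * q + q * star c`, where `a = Γl⁻¹ Γl'` and `c = Γr⁻¹ Γr'`.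
A curve of constant norm is orthogonal to its derivative, so `a` and `c` are purely imaginary.
The entries of that matrix are `±` the sums and differences of the coordinates of `a` and `c`, and
the conditions defining `𝔔₄` can be read off from them.
-/

section ConstantNorm

variable {S : Set ℝ} {r t : ℝ}

lemma inner_deriv_eq_zero_of_norm_eq {E : Type*} [NormedAddCommGroup E] [InnerProductSpace ℝ E]
    {γ : ℝ → E} (hS : UniqueDiffWithinAt ℝ S t) (hγ : DifferentiableAt ℝ γ t)
    (hnorm : ∀ x ∈ S, ‖γ x‖ = r) (ht : t ∈ S) : inner ℝ (γ t) (deriv γ t) = 0 := by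
  have hconst : HasDerivWithinAt (‖γ ·‖ ^ 2) 0 S t :=
    (hasDerivWithinAt_const t S (r ^ 2)).congr_of_mem (fun x hx => by simp [hnorm x hx]) ht
  have hinner : HasDerivWithinAt (‖γ ·‖ ^ 2) (2 * inner ℝ (γ t) (deriv γ t)) S t :=
    hγ.hasDerivAt.hasDerivWithinAt.norm_sq
  simpa using hS.eq_deriv _ hinner hconst

lemma re_inv_mul (a b : Quaternion ℝ) : (a⁻¹ * b).re = (normSq a)⁻¹ * inner ℝ a b := by
  rw [Quaternion.inv_def, smul_mul_assoc, Quaternion.re_smul, smul_eq_mul, Quaternion.inner_def]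
  congr 1
  simp only [Quaternion.re_mul, Quaternion.re_star, Quaternion.imI_star, Quaternion.imJ_star,
    Quaternion.imK_star]
  ring

lemma re_inv_mul_deriv_eq_zero_of_norm_eq {γ : ℝ → Quaternion ℝ}
    (hS : UniqueDiffWithinAt ℝ S t) (hγ : DifferentiableAt ℝ γ t)
    (hnorm : ∀ x ∈ S, ‖γ x‖ = r) (ht : t ∈ S) : ((γ t)⁻¹ * deriv γ t).re = 0 := by
  rw [re_inv_mul, inner_deriv_eq_zero_of_norm_eq hS hγ hnorm ht, mul_zero]

end ConstantNorm

instance instStarModuleRealQuaternion : StarModule ℝ (Quaternion ℝ) where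
  star_smul r q := by rw [Quaternion.star_smul, star_trivial r]

/-- The standard basis `(1, i, j, k)` as a `Module.Basis` of Mathlib's `Quaternion ℝ`, which makes
`pairMatrix` an instance of `LinearMap.toMatrix`. -/
noncomputable def oneIJKBasis : Module.Basis (Fin 4) ℝ (Quaternion ℝ) :=
  QuaternionAlgebra.basisOneIJK (-1) 0 (-1)

lemma oneIJKBasis_repr_apply (q : Quaternion ℝ) (i : Fin 4) :
    oneIJKBasis.repr q i = quatCoord q i :=
  rfl

lemma oneIJKBasis_apply (i : Fin 4) : oneIJKBasis i = quatBasis i := by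
  apply oneIJKBasis.repr.injective
  ext j
  rw [oneIJKBasis.repr_self, oneIJKBasis_repr_apply]
  fin_cases i <;> fin_cases j <;> simp [quatCoord, quatBasis]

section PairMatrix

variable {zl zr wl wr : Quaternion ℝ}

lemma pairMatrix_eq_toMatrix (zl zr : Quaternion ℝ) :
    pairMatrix zl zr =
      LinearMap.toMatrix oneIJKBasis oneIJKBasis (LinearMap.mulLeftRight ℝ (zl, star zr)) := by
  ext i j
  rw [LinearMap.toMatrix_apply, oneIJKBasis_repr_apply, oneIJKBasis_apply,
    LinearMap.mulLeftRight_apply, pairMatrix, Matrix.of_apply]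

lemma pairMatrix_one_one : pairMatrix 1 1 = 1 := by
  have mulLeftRight_one : LinearMap.mulLeftRight ℝ ((1 : Quaternion ℝ), star 1) = LinearMap.id := by
    ext1 q
    simp only [LinearMap.mulLeftRight_apply, star_one, one_mul, mul_one, LinearMap.id_apply]
  rw [pairMatrix_eq_toMatrix, mulLeftRight_one, LinearMap.toMatrix_id]

lemma pairMatrix_mul_pairMatrix :
    pairMatrix zl zr * pairMatrix wl wr = pairMatrix (zl * wl) (zr * wr) := by
  have mulLeftRight_comp :
      LinearMap.mulLeftRight ℝ (zl, star zr) ∘ₗ LinearMap.mulLeftRight ℝ (wl, star wr) =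
        LinearMap.mulLeftRight ℝ (zl * wl, star (zr * wr)) := by
    ext1 q
    simp only [LinearMap.comp_apply, LinearMap.mulLeftRight_apply, star_mul, mul_assoc]
  simp only [pairMatrix_eq_toMatrix, ← mulLeftRight_comp]
  exact (LinearMap.toMatrix_comp _ _ _ _ _).symm

lemma inv_pairMatrix (hl : zl ≠ 0) (hr : zr ≠ 0) :
    (pairMatrix zl zr)⁻¹ = pairMatrix zl⁻¹ zr⁻¹ := by
  apply Matrix.inv_eq_left_inv
  rw [pairMatrix_mul_pairMatrix, inv_mul_cancel₀ hl, inv_mul_cancel₀ hr, pairMatrix_one_one]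

lemma pairMatrix_one_right_add_one_left (a c : Quaternion ℝ) :
    pairMatrix a 1 + pairMatrix 1 c =
      !![a.re + c.re, c.imI - a.imI, c.imJ - a.imJ, c.imK - a.imK;
        a.imI - c.imI, a.re + c.re, -(a.imK + c.imK), a.imJ + c.imJ;
        a.imJ - c.imJ, a.imK + c.imK, a.re + c.re, -(a.imI + c.imI);
        a.imK - c.imK, -(a.imJ + c.imJ), a.imI + c.imI, a.re + c.re] := by
  ext i j
  fin_cases i <;> fin_cases j <;> simp [pairMatrix, quatCoord, quatBasis] <;> ring

lemma memQ4_pairMatrix_add_iff (a c : Quaternion ℝ) :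
    MemQ4 (pairMatrix a 1 + pairMatrix 1 c) ↔
      a.re + c.re = 0 ∧ a.imJ = 0 ∧ c.imJ = 0 ∧ a.imK = c.imK ∧ c.imI < a.imI ∧ 0 < a.imK := by
  rw [pairMatrix_one_right_add_one_left]
  constructor
  · rintro ⟨hskew, htri, (h10 : 0 < a.imI - c.imI), (h21 : 0 < a.imK + c.imK)⟩
    have h00 : a.re + c.re = -(a.re + c.re) := congr_fun₂ hskew 0 0
    have h02 : c.imJ - a.imJ = 0 := htri 0 2 (by decide)
    have h03 : c.imK - a.imK = 0 := htri 0 3 (by decide)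
    have h13 : a.imJ + c.imJ = 0 := htri 1 3 (by decide)
    refine ⟨?_, ?_, ?_, ?_, ?_, ?_⟩ <;> linarith
  · rintro ⟨hre, haJ, hcJ, hK, hI, hpos⟩
    refine ⟨?_, fun i j hij => ?_, ?_, ?_⟩
    · ext i j
      fin_cases i <;> fin_cases j <;> simp [hre, haJ, hcJ, hK]
    · fin_cases i <;> fin_cases j <;> simp_all
    · simpa using hI
    · simpa [← hK] using hpos

lemma memQ4_pairMatrix_add_iff_exists {a c : Quaternion ℝ} (ha : a.re = 0) (hc : c.re = 0) :
    MemQ4 (pairMatrix a 1 + pairMatrix 1 c) ↔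
      ∃ bl br d : ℝ, a = ⟨0, bl, 0, d⟩ ∧ c = ⟨0, br, 0, d⟩ ∧ br < bl ∧ 0 < d := by
  rw [memQ4_pairMatrix_add_iff]
  constructor
  · rintro ⟨-, haJ, hcJ, hK, hI, hpos⟩
    exact ⟨a.imI, c.imI, a.imK, QuaternionAlgebra.ext ha rfl haJ rfl,
      QuaternionAlgebra.ext hc rfl hcJ hK.symm, hI, hpos⟩
  · rintro ⟨bl, br, d, rfl, rfl, hb, hd⟩
    exact ⟨add_zero 0, rfl, rfl, rfl, hb, hd⟩

end PairMatrix

section LogDerivative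

variable {Γl Γr : ℝ → Quaternion ℝ} {t : ℝ}

lemma matDeriv_pairMatrix (hl : DifferentiableAt ℝ Γl t) (hr : DifferentiableAt ℝ Γr t) :
    matDeriv (fun s => pairMatrix (Γl s) (Γr s)) t =
      pairMatrix (deriv Γl t) (Γr t) + pairMatrix (Γl t) (deriv Γr t) := by
  ext i j
  have hprod : HasDerivAt (fun s => Γl s * quatBasis j * star (Γr s))
      (deriv Γl t * quatBasis j * star (Γr t) + Γl t * quatBasis j * star (deriv Γr t)) t :=
    (hl.hasDerivAt.mul_const _).mul hr.hasDerivAt.star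
  have hcoord :=
    ((oneIJKBasis.coord i).toContinuousLinearMap.hasFDerivAt.comp_hasDerivAt t hprod).deriv
  rw [map_add] at hcoord
  exact hcoord

lemma inv_pairMatrix_mul_matDeriv (hl : DifferentiableAt ℝ Γl t) (hr : DifferentiableAt ℝ Γr t)
    (hl₀ : Γl t ≠ 0) (hr₀ : Γr t ≠ 0) :
    (pairMatrix (Γl t) (Γr t))⁻¹ * matDeriv (fun s => pairMatrix (Γl s) (Γr s)) t =
      pairMatrix ((Γl t)⁻¹ * deriv Γl t) 1 + pairMatrix 1 ((Γr t)⁻¹ * deriv Γr t) := by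
  rw [matDeriv_pairMatrix hl hr, inv_pairMatrix hl₀ hr₀, mul_add, pairMatrix_mul_pairMatrix,
    pairMatrix_mul_pairMatrix, inv_mul_cancel₀ hl₀, inv_mul_cancel₀ hr₀]

lemma memQ4_inv_pairMatrix_mul_matDeriv_iff {S : Set ℝ} {rl rr : ℝ}
    (hS : UniqueDiffWithinAt ℝ S t) (ht : t ∈ S)
    (hl : DifferentiableAt ℝ Γl t) (hr : DifferentiableAt ℝ Γr t)
    (hl₀ : rl ≠ 0) (hr₀ : rr ≠ 0) (hnl : ∀ x ∈ S, ‖Γl x‖ = rl) (hnr : ∀ x ∈ S, ‖Γr x‖ = rr) :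
    MemQ4 ((pairMatrix (Γl t) (Γr t))⁻¹ * matDeriv (fun s => pairMatrix (Γl s) (Γr s)) t) ↔
      ∃ bl br d : ℝ, (Γl t)⁻¹ * deriv Γl t = ⟨0, bl, 0, d⟩ ∧
        (Γr t)⁻¹ * deriv Γr t = ⟨0, br, 0, d⟩ ∧ br < bl ∧ 0 < d := by
  have hΓl : Γl t ≠ 0 := norm_ne_zero_iff.mp (hnl t ht ▸ hl₀)
  have hΓr : Γr t ≠ 0 := norm_ne_zero_iff.mp (hnr t ht ▸ hr₀)
  rw [inv_pairMatrix_mul_matDeriv hl hr hΓl hΓr]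
  exact memQ4_pairMatrix_add_iff_exists (re_inv_mul_deriv_eq_zero_of_norm_eq hS hl hnl ht)
    (re_inv_mul_deriv_eq_zero_of_norm_eq hS hr hnr ht)

end LogDerivative

theorem quasi_jacobian_iff_log_derivatives_general {S : Set ℝ} (hS : UniqueDiffOn ℝ S)
    (Γl Γr : ℝ → Quaternion ℝ) {rl rr : ℝ} (hrl : rl ≠ 0) (hrr : rr ≠ 0)
    (hl : ∀ t ∈ S, DifferentiableAt ℝ Γl t) (hr : ∀ t ∈ S, DifferentiableAt ℝ Γr t)
    (hnl : ∀ t ∈ S, ‖Γl t‖ = rl) (hnr : ∀ t ∈ S, ‖Γr t‖ = rr) :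
    (∀ t ∈ S,
        MemQ4 ((pairMatrix (Γl t) (Γr t))⁻¹ *
          matDeriv (fun s => pairMatrix (Γl s) (Γr s)) t)) ↔
      ∃ bl br d : ℝ → ℝ, ∀ t ∈ S,
        (Γl t)⁻¹ * deriv Γl t = (⟨0, bl t, 0, d t⟩ : Quaternion ℝ) ∧
        (Γr t)⁻¹ * deriv Γr t = (⟨0, br t, 0, d t⟩ : Quaternion ℝ) ∧
        br t < bl t ∧ 0 < d t := by
  have hpointwise := fun t ht => memQ4_inv_pairMatrix_mul_matDeriv_iff (hS t ht) ht
    (hl t ht) (hr t ht) hrl hrr hnl hnr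
  constructor
  · intro hQ
    choose! bl br d h using fun t ht => (hpointwise t ht).mp (hQ t ht)
    exact ⟨bl, br, d, h⟩
  · rintro ⟨bl, br, d, h⟩ t ht
    exact (hpointwise t ht).mpr ⟨bl t, br t, d t, h t ht⟩

/-- The curve `t ↦ (q ↦ Γ_l(t) q Γ̄_r(t)) ∈ SO₄` is quasi-Jacobian iff the logarithmic
derivatives of `Γ_l, Γ_r` are of the form `b_l i + d k`, `b_r i + d k` with `b_l > b_r`,
`d > 0`. -/
theorem quasi_jacobian_iff_log_derivatives
    (Γl Γr : ℝ → Quaternion ℝ)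
    (hl : ContDiff ℝ (⊤ : ℕ∞) Γl) (hr : ContDiff ℝ (⊤ : ℕ∞) Γr)
    (hul : ∀ t ∈ Icc (0 : ℝ) 1, ‖Γl t‖ = 1) (hur : ∀ t ∈ Icc (0 : ℝ) 1, ‖Γr t‖ = 1) :
    (∀ t ∈ Icc (0 : ℝ) 1,
        MemQ4 ((pairMatrix (Γl t) (Γr t))⁻¹ *
          matDeriv (fun s => pairMatrix (Γl s) (Γr s)) t)) ↔
      ∃ bl br d : ℝ → ℝ, ∀ t ∈ Icc (0 : ℝ) 1,
        (Γl t)⁻¹ * deriv Γl t = (⟨0, bl t, 0, d t⟩ : Quaternion ℝ) ∧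
        (Γr t)⁻¹ * deriv Γr t = (⟨0, br t, 0, d t⟩ : Quaternion ℝ) ∧
        br t < bl t ∧ 0 < d t := by
  exact quasi_jacobian_iff_log_derivatives_general (uniqueDiffOn_Icc zero_lt_one) Γl Γr
    one_ne_zero one_ne_zero (fun t _ => hl.differentiable (by simp) t)
    (fun t _ => hr.differentiable (by simp) t) hul hur
end

section
/- Let Γ_l, Γ_r : [0,1] → 𝕊³ be smooth curves of unit quaternions whose logarithmic derivatives have the form Γ_l(t)⁻¹Γ_l'(t) = b_l(t)·i + d(t)·k and Γ_r(t)⁻¹Γ_r'(t) = b_r(t)·i + d(t)·k with b_l(t) > b_r(t) and d(t) > 0 for all t. Define γ(t) = Γ_l(t)·(conjugate of Γ_r(t)) ∈ 𝕊³ ⊂ ℍ ≅ ℝ⁴, γ_l(t) = Γ_l(t)·i·(conjugate of Γ_l(t)) and γ_r(t) = Γ_r(t)·i·(conjugate of Γ_r(t)), both unit imaginary quaternions, i.e. points of S² ⊂ Im ℍ ≅ ℝ³. Then for all t ∈ [0,1]: ‖γ'(t)‖ = b_l(t) − b_r(t) and ‖γ_l'(t)‖ = ‖γ_r'(t)‖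 = 2 d(t). -/
open Set Quaternion

/-- The quaternion with the given coordinates in the basis `(1, i, j, k)`. -/
noncomputable def quatMk (a b c d : ℝ) : Quaternion ℝ := ⟨a, b, c, d⟩

/-- The quaternion `i`. -/
noncomputable def quatI : Quaternion ℝ := quatMk 0 1 0 0

/-!
If `Γ₁' = Γ₁ w₁` and `Γ₂' = Γ₂ w₂`, then `(Γ₁ q Γ̄₂)' = Γ₁ (w₁ q + q w̄₂) Γ̄₂`, and multiplication
by unit quaternions is isometric, so the speed is `‖w₁ q + q w̄₂‖`. With `wₗ = bₗ i + d k` and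
`wᵣ = bᵣ i + d k`, this vector is `(bₗ - bᵣ) i` for `γ` (`q = 1`), where the common component `d k`
cancels, and `2 d j` for `γₗ` and `γᵣ` (`q = i`, `w₁ = w₂`), where the components along `i` cancel.
-/

section ProductRule

variable {𝕜 : Type*} [NontriviallyNormedField 𝕜]

theorem hasDerivAt_mul_mul_star [StarRing 𝕜] [TrivialStar 𝕜] {A : Type*} [NormedRing A]
    [NormedAlgebra 𝕜 A] [StarRing A] [StarModule 𝕜 A] [ContinuousStar A]
    {f g : 𝕜 → A} {v w : A} {t : 𝕜} (hf : HasDerivAt f (f t * v) t)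
    (hg : HasDerivAt g (g t * w) t) (q : A) :
    HasDerivAt (fun s => f s * q * star (g s)) (f t * (v * q + q * star w) * star (g t)) t := by
  convert (hf.mul_const q).fun_mul hg.star using 1
  rw [star_mul]
  noncomm_ring

theorem hasDerivAt_of_inv_mul_deriv_eq {A : Type*} [NormedDivisionRing A] [NormedAlgebra 𝕜 A]
    {f : 𝕜 → A} {w : A} {t : 𝕜} (hf : DifferentiableAt 𝕜 f t) (h0 : f t ≠ 0)
    (hw : (f t)⁻¹ * deriv f t = w) : HasDerivAt f (f t * w) t := by
  rw [← hw, mul_inv_cancel_left₀ h0]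
  exact hf.hasDerivAt

end ProductRule

instance {S R : Type*} [CommRing R] [Monoid S] [Star S] [TrivialStar S] [DistribMulAction S R] :
    StarModule S ℍ[R] where
  star_smul r q := by rw [Quaternion.star_smul, star_trivial r]

theorem norm_deriv_mul_mul_star {f g : ℝ → ℍ[ℝ]} {v w : ℍ[ℝ]} {t : ℝ}
    (hfu : ‖f t‖ = 1) (hgu : ‖g t‖ = 1) (hf : HasDerivAt f (f t * v) t)
    (hg : HasDerivAt g (g t * w) t) (q : ℍ[ℝ]) :
    ‖deriv (fun s => f s * q * star (g s)) t‖ = ‖v * q + q * star w‖ := by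
  rw [(hasDerivAt_mul_mul_star hf hg q).deriv, norm_mul, norm_mul, Quaternion.norm_star, hfu, hgu,
    one_mul, mul_one]

section Coordinates

variable (a b c d : ℝ)

@[simp] theorem quatMk_re : (quatMk a b c d).re = a := rfl

@[simp] theorem quatMk_imI : (quatMk a b c d).imI = b := rfl

@[simp] theorem quatMk_imJ : (quatMk a b c d).imJ = c := rfl

@[simp] theorem quatMk_imK : (quatMk a b c d).imK = d := rfl

theorem norm_quatMk : ‖quatMk a b c d‖ = √(a ^ 2 + b ^ 2 + c ^ 2 + d ^ 2) := by
  rw [← Real.sqrt_mul_self (norm_nonneg _), ← Quaternion.normSq_eq_norm_mul_self,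
    Quaternion.normSq_def', quatMk_re, quatMk_imI, quatMk_imJ, quatMk_imK]

theorem quatMk_add_star_quatMk (a' b' c' d' : ℝ) :
    quatMk a b c d + star (quatMk a' b' c' d') = quatMk (a + a') (b - b') (c - c') (d - d') := by
  ext <;> simp [sub_eq_add_neg]

theorem quatMk_mul_quatI_add_quatI_mul_star :
    quatMk a b c d * quatI + quatI * star (quatMk a b c d) =
      quatMk 0 (2 * a) (2 * d) (-2 * c) := by
  ext <;> simp [quatI] <;> ring

end Coordinates

theorem norm_deriv_mul_star {f g : ℝ → ℍ[ℝ]} {b b' c d t : ℝ} (hfu : ‖f t‖ = 1) (hgu : ‖g t‖ = 1)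
    (hf : HasDerivAt f (f t * quatMk 0 b c d) t) (hg : HasDerivAt g (g t * quatMk 0 b' c d) t) :
    ‖deriv (fun s => f s * star (g s)) t‖ = |b - b'| := by
  calc ‖deriv (fun s => f s * star (g s)) t‖
    _ = ‖quatMk 0 b c d + star (quatMk 0 b' c d)‖ := by
      simpa only [mul_one, one_mul] using norm_deriv_mul_mul_star hfu hgu hf hg 1
    _ = ‖quatMk 0 (b - b') 0 0‖ := by simp only [quatMk_add_star_quatMk, add_zero, sub_self]
    _ = |b - b'| := by simp [norm_quatMk, Real.sqrt_sq_eq_abs]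

theorem norm_deriv_mul_quatI_mul_star {f : ℝ → ℍ[ℝ]} {b c d t : ℝ} (hfu : ‖f t‖ = 1)
    (hf : HasDerivAt f (f t * quatMk 0 b c d) t) :
    ‖deriv (fun s => f s * quatI * star (f s)) t‖ = 2 * √(c ^ 2 + d ^ 2) := by
  calc ‖deriv (fun s => f s * quatI * star (f s)) t‖
    _ = ‖quatMk 0 (2 * 0) (2 * d) (-2 * c)‖ := by
      rw [norm_deriv_mul_mul_star hfu hfu hf hf, quatMk_mul_quatI_add_quatI_mul_star]
    _ = √(2 ^ 2 * (c ^ 2 + d ^ 2)) := by rw [norm_quatMk]; ring_nf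
    _ = 2 * √(c ^ 2 + d ^ 2) := by
      rw [Real.sqrt_mul (by positivity), Real.sqrt_sq zero_le_two]

theorem speeds_of_left_and_right_parts_general
    {Γl Γr : ℝ → ℍ[ℝ]} {bl br d t : ℝ}
    (hl : DifferentiableAt ℝ Γl t) (hr : DifferentiableAt ℝ Γr t)
    (hul : ‖Γl t‖ = 1) (hur : ‖Γr t‖ = 1)
    (hld : (Γl t)⁻¹ * deriv Γl t = quatMk 0 bl 0 d)
    (hrd : (Γr t)⁻¹ * deriv Γr t = quatMk 0 br 0 d) :
    ‖deriv (fun s => Γl s * star (Γr s)) t‖ = |bl - br| ∧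
    ‖deriv (fun s => Γl s * quatI * star (Γl s)) t‖ = 2 * |d| ∧
    ‖deriv (fun s => Γr s * quatI * star (Γr s)) t‖ = 2 * |d| := by
  have hΓl := hasDerivAt_of_inv_mul_deriv_eq hl (norm_ne_zero_iff.1 (by simp [hul])) hld
  have hΓr := hasDerivAt_of_inv_mul_deriv_eq hr (norm_ne_zero_iff.1 (by simp [hur])) hrd
  have norm_deriv_part {f : ℝ → ℍ[ℝ]} {b : ℝ} (hfu : ‖f t‖ = 1)
      (hf : HasDerivAt f (f t * quatMk 0 b 0 d) t) :
      ‖deriv (fun s => f s * quatI * star (f s)) t‖ = 2 * |d| := by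
    rw [norm_deriv_mul_quatI_mul_star hfu hf, zero_pow two_ne_zero, zero_add, Real.sqrt_sq_eq_abs]
  exact ⟨norm_deriv_mul_star hul hur hΓl hΓr, norm_deriv_part hul hΓl, norm_deriv_part hur hΓr⟩

/-- Decomposition of a generic curve in `S³` into its left and right parts: if the
logarithmic derivatives of `Γ_l, Γ_r` are `b_l i + d k` and `b_r i + d k` with
`b_l > b_r` and `d > 0`, then the curve `γ = Γ_l Γ̄_r` in `S³` and the curves
`γ_l = Γ_l i Γ̄_l`, `γ_r = Γ_r i Γ̄_r` in `S²` satisfy `‖γ'‖ = b_l − b_r` and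
`‖γ_l'‖ = ‖γ_r'‖ = 2 d`. -/
theorem speeds_of_left_and_right_parts
    (Γl Γr : ℝ → Quaternion ℝ) (bl br d : ℝ → ℝ)
    (hl : ContDiff ℝ (⊤ : ℕ∞) Γl) (hr : ContDiff ℝ (⊤ : ℕ∞) Γr)
    (hul : ∀ t ∈ Icc (0 : ℝ) 1, ‖Γl t‖ = 1) (hur : ∀ t ∈ Icc (0 : ℝ) 1, ‖Γr t‖ = 1)
    (hld : ∀ t ∈ Icc (0 : ℝ) 1, (Γl t)⁻¹ * deriv Γl t = quatMk 0 (bl t) 0 (d t))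
    (hrd : ∀ t ∈ Icc (0 : ℝ) 1, (Γr t)⁻¹ * deriv Γr t = quatMk 0 (br t) 0 (d t))
    (hb : ∀ t ∈ Icc (0 : ℝ) 1, br t < bl t) (hd : ∀ t ∈ Icc (0 : ℝ) 1, 0 < d t) :
    ∀ t ∈ Icc (0 : ℝ) 1,
      ‖deriv (fun s => Γl s * star (Γr s)) t‖ = bl t - br t ∧
      ‖deriv (fun s => Γl s * quatI * star (Γl s)) t‖ = 2 * d t ∧
      ‖deriv (fun s => Γr s * quatI * star (Γr s)) t‖ = 2 * d t := by
  intro t ht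
  simpa only [abs_of_pos (sub_pos.2 (hb t ht)), abs_of_pos (hd t ht)] using
    speeds_of_left_and_right_parts_general (hl.differentiable (by simp) t)
      (hr.differentiable (by simp) t) (hul t ht) (hur t ht) (hld t ht) (hrd t ht)
end

section
/- Let n ≥ 1, let γ : [0,1] → ℝ^{n+1} be a smooth curve and let φ : [a,b] → [0,1] be a smooth function on a nontrivial interval. Then for every t ∈ [a,b], det((γ∘φ)(t), (γ∘φ)'(t), …, (γ∘φ)^{(n)}(t)) = φ'(t)^{n(n+1)/2} · det(γ(φ(t)), γ'(φ(t)), …, γ^{(n)}(φ(t))). In particular, if φ'(t) > 0 for all t (a positive reparametrization), then γ is locally convex if and only if γ∘φ is locally convex. -/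
open Set

/-- Determinant of the `m×m` matrix whose `j`-th column is the `j`-th derivative of the
curve `γ : ℝ → ℝ^m` at `t`. -/
noncomputable def detCurve (m : ℕ) (γ : ℝ → Fin m → ℝ) (t : ℝ) : ℝ :=
  (Matrix.of fun i j : Fin m => iteratedDeriv (j : ℕ) γ t i).det

/-!
Faà di Bruno's formula writes the `j`-th derivative of `γ ∘ φ` as a combination of the derivatives
`γ^{(k)} ∘ φ` with `k ≤ j`, so the matrix of derivatives of `γ ∘ φ` is that of `γ` times an upper
triangular matrix of partial Bell polynomials in the derivatives of `φ`. The only partition of a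
`j`-element set into `j` parts is the one into singletons, so the diagonal entries of that matrix
are `(φ')^j`, and its determinant is `φ'` to the power `0 + 1 + ⋯ + n`.
-/

section Partitions

variable {n : ℕ} (c : OrderedFinpartition n)

lemma orderedFinpartition_sum_partSize : ∑ i, c.partSize i = n := by
  simpa using Fintype.card_congr c.equivSigma

lemma orderedFinpartition_partSize_eq_one (hc : c.length = n) (i : Fin c.length) :
    c.partSize i = 1 := by
  have hsum : ∑ i : Fin c.length, 1 = ∑ i, c.partSize i := by
    rw [orderedFinpartition_sum_partSize, Fin.sum_const, smul_eq_mul, mul_one, hc]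
  exact ((Finset.sum_eq_sum_iff_of_le fun i _ => c.partSize_pos i).1 hsum i
    (Finset.mem_univ i)).symm

lemma orderedFinpartition_length_eq_iff : c.length = n ↔ c = .atomic n := by
  refine ⟨fun hc => ?_, fun hc => hc ▸ rfl⟩
  have hsize : c.partSize = fun _ => 1 := funext (orderedFinpartition_partSize_eq_one c hc)
  obtain ⟨length, partSize, _, emb, _, hmono, _, _⟩ := c
  dsimp only at hc hsize
  subst hc hsize
  simp only [OrderedFinpartition.ext_iff, OrderedFinpartition.atomic, heq_eq_eq, true_and]
  funext i k
  rw [Subsingleton.elim k 0]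
  exact hmono.apply_eq

end Partitions

section PartialBell

variable {R : Type*} [CommSemiring R] (x : ℕ → R)

/-- The partial exponential Bell polynomial `B_{n,k}`, evaluated at the sequence `x`: the sum over
all partitions of an `n`-element set into `k` parts of the product of `x` at the sizes of the parts.
The variables of `B_{n,k}` are numbered from `1`, so `x 0` does not occur. -/
noncomputable def partialBell (n k : ℕ) : R :=
  ∑ c : OrderedFinpartition n with c.length = k, ∏ i, x (c.partSize i)

lemma partialBell_eq_zero_of_lt {n k : ℕ} (h : n < k) : partialBell x n k = 0 := by
  rw [partialBell, Finset.filter_false_of_mem fun c _ => (c.length_le.trans_lt h).ne,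
    Finset.sum_empty]

lemma partialBell_self (n : ℕ) : partialBell x n n = x 1 ^ n := by
  simp [partialBell, orderedFinpartition_length_eq_iff, Finset.filter_eq']

end PartialBell

/-- The matrix of partial Bell polynomials `B_{j,k}` with `j, k < m`, evaluated at the sequence `x`.
Rows are indexed by `k` and columns by `j`, so that it acts on the right of a matrix whose columns
are derivatives. -/
noncomputable def bellMatrix {R : Type*} [CommSemiring R] (m : ℕ) (x : ℕ → R) :
    Matrix (Fin m) (Fin m) R :=
  Matrix.of fun k j => partialBell x j k

lemma bellMatrix_isUpperTriangular {R : Type*} [CommSemiring R] (m : ℕ) (x : ℕ → R) :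
    (bellMatrix m x).IsUpperTriangular :=
  fun _ _ h => partialBell_eq_zero_of_lt x h

lemma det_bellMatrix {R : Type*} [CommRing R] (m : ℕ) (x : ℕ → R) :
    (bellMatrix m x).det = x 1 ^ m.choose 2 := by
  rw [Matrix.det_of_isUpperTriangular (bellMatrix_isUpperTriangular m x)]
  simp only [bellMatrix, Matrix.of_apply, partialBell_self]
  rw [Finset.prod_pow_eq_pow_sum, Fin.sum_univ_eq_sum_range fun k => k, Finset.sum_range_id,
    Nat.choose_two_right]

section Derivatives

variable {𝕜 : Type*} [NontriviallyNormedField 𝕜]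

theorem iteratedDeriv_scomp_eq_sum_partialBell {E : Type*} [NormedAddCommGroup E]
    [NormedSpace 𝕜 E] {g : 𝕜 → E} {f : 𝕜 → 𝕜} {x : 𝕜} {j m : ℕ} (hg : ContDiffAt 𝕜 j g (f x))
    (hf : ContDiffAt 𝕜 j f x) (hm : j < m) :
    iteratedDeriv j (g ∘ f) x =
      ∑ k : Fin m, partialBell (iteratedDeriv · f x) j k • iteratedDeriv k g (f x) := by
  have hlength (c : OrderedFinpartition j) : c.length < m := c.length_le.trans_lt hm
  rw [iteratedDeriv_scomp_eq_sum_orderedFinpartition hg hf le_rfl,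
    ← Finset.sum_fiberwise_of_maps_to (t := Finset.range m)
      (g := OrderedFinpartition.length) fun c _ => Finset.mem_range.2 (hlength c),
    ← Fin.sum_univ_eq_sum_range]
  refine Finset.sum_congr rfl fun k _ => ?_
  rw [partialBell, Finset.sum_smul]
  refine Finset.sum_congr rfl fun c hc => ?_
  congr 2
  exact (Finset.mem_filter.1 hc).2

/-- The matrix whose columns are the derivatives of orders `0, …, m - 1` at `t` of a curve in `𝕜^m`;
`detCurve` is its determinant for `𝕜 = ℝ`. -/
noncomputable def jetMatrix {m : ℕ} (γ : 𝕜 → Fin m → 𝕜) (t : 𝕜) : Matrix (Fin m) (Fin m) 𝕜 :=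
  Matrix.of fun i j => iteratedDeriv j γ t i

variable {n : ℕ} {γ : 𝕜 → Fin (n + 1) → 𝕜} {φ : 𝕜 → 𝕜}

lemma jetMatrix_comp {t : 𝕜} (hγ : ContDiffAt 𝕜 n γ (φ t)) (hφ : ContDiffAt 𝕜 n φ t) :
    jetMatrix (γ ∘ φ) t = jetMatrix γ (φ t) * bellMatrix (n + 1) (iteratedDeriv · φ t) := by
  ext i j
  have hj : ((j : ℕ) : WithTop ℕ∞) ≤ n := by exact_mod_cast j.is_le
  simp only [jetMatrix, bellMatrix, Matrix.mul_apply, Matrix.of_apply,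
    iteratedDeriv_scomp_eq_sum_partialBell (hγ.of_le hj) (hφ.of_le hj) j.is_lt, Finset.sum_apply,
    Pi.smul_apply, smul_eq_mul, mul_comm]

lemma det_jetMatrix_comp {t : 𝕜} (hγ : ContDiffAt 𝕜 n γ (φ t)) (hφ : ContDiffAt 𝕜 n φ t) :
    (jetMatrix (γ ∘ φ) t).det = deriv φ t ^ (n * (n + 1) / 2) * (jetMatrix γ (φ t)).det := by
  rw [jetMatrix_comp hγ hφ, Matrix.det_mul, det_bellMatrix, iteratedDeriv_one,
    Nat.choose_two_right, Nat.add_sub_cancel, mul_comm n, mul_comm]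

theorem det_reparametrization_general {s : Set 𝕜} (hγ : ∀ u ∈ φ '' s, ContDiffAt 𝕜 n γ u)
    (hφ : ∀ t ∈ s, ContDiffAt 𝕜 n φ t) :
    (∀ t ∈ s,
        (jetMatrix (γ ∘ φ) t).det = deriv φ t ^ (n * (n + 1) / 2) * (jetMatrix γ (φ t)).det) ∧
    ((∀ t ∈ s, deriv φ t ≠ 0) →
      ((∀ u ∈ φ '' s, (jetMatrix γ u).det ≠ 0) ↔ ∀ t ∈ s, (jetMatrix (γ ∘ φ) t).det ≠ 0)) := by
  have hdet (t : 𝕜) (ht : t ∈ s) :=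
    det_jetMatrix_comp (hγ _ (mem_image_of_mem φ ht)) (hφ t ht)
  refine ⟨hdet, fun hderiv => forall_mem_image.trans (forall₂_congr fun t ht => ?_)⟩
  rw [hdet t ht, mul_ne_zero_iff_left (pow_ne_zero _ (hderiv t ht))]

end Derivatives

/-- Reparametrization formula: `det((γ∘φ), (γ∘φ)', …) = φ'^{n(n+1)/2} det(γ, γ', …) ∘ φ`;
in particular a positive reparametrization preserves local convexity. -/
theorem det_reparametrization (n : ℕ) (hn : 1 ≤ n)
    (γ : ℝ → Fin (n+1) → ℝ) (φ : ℝ → ℝ) (a b : ℝ) (hab : a < b)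
    (hγ : ContDiff ℝ (⊤ : ℕ∞) γ) (hφ : ContDiff ℝ (⊤ : ℕ∞) φ)
    (hmaps : MapsTo φ (Icc a b) (Icc 0 1))
    (hsurj : SurjOn φ (Icc a b) (Icc 0 1)) :
    (∀ t ∈ Icc a b,
        detCurve (n+1) (γ ∘ φ) t = deriv φ t ^ (n * (n+1) / 2) * detCurve (n+1) γ (φ t)) ∧
    ((∀ t ∈ Icc a b, 0 < deriv φ t) →
      ((∀ s ∈ Icc (0 : ℝ) 1, detCurve (n+1) γ s ≠ 0) ↔
        ∀ t ∈ Icc a b, detCurve (n+1) (γ ∘ φ) t ≠ 0)) := by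
  obtain ⟨hdet, hconvex⟩ := det_reparametrization_general (s := Icc a b)
    (fun u _ => (contDiff_infty.1 hγ n).contDiffAt) fun t _ => (contDiff_infty.1 hφ n).contDiffAt
  rw [hsurj.image_eq_of_mapsTo hmaps] at hconvex
  exact ⟨hdet, fun hpos => hconvex fun t ht => (hpos t ht).ne'⟩
end

section
/- Let n ≥ 1 and let γ : [0,1] → ℝ^{n+1} be a smooth curve with γ(t) ≠ 0 for all t ∈ [0,1]. Then γ is locally convex if and only if the curve t ↦ γ(t)/‖γ(t)‖, taking values in the unit sphere S^n, is locally convex. -/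
open Set

/-!
By the Leibniz rule, multiplying a curve by a scalar function `f` multiplies its matrix of
derivatives on the right by an upper triangular matrix with `f` along the diagonal. Radial
projection is the case `f = 1 / ‖γ‖`, so it changes the determinant by the nonzero factor
`(1 / ‖γ‖) ^ (n + 1)`.
-/

section LeibnizRule

variable {𝕜 : Type*} [NontriviallyNormedField 𝕜] {x : 𝕜}

-- Summing over the order of the derivative of `g` gives the entries of a matrix product.
lemma iteratedDeriv_smul_eq_sum {𝔸 F : Type*} [NormedRing 𝔸] [NormedAlgebra 𝕜 𝔸]
    [NormedAddCommGroup F] [NormedSpace 𝕜 F] [Module 𝔸 F] [IsBoundedSMul 𝔸 F]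
    [IsScalarTower 𝕜 𝔸 F] {n : ℕ} {f : 𝕜 → 𝔸} {g : 𝕜 → F}
    (hf : ContDiffAt 𝕜 n f x) (hg : ContDiffAt 𝕜 n g x) :
    iteratedDeriv n (f • g) x = ∑ k ∈ Finset.range (n + 1),
      n.choose k • iteratedDeriv (n - k) f x • iteratedDeriv k g x := by
  have leibniz := iteratedDerivWithin_smul (mem_univ x) uniqueDiffOn_univ
    hf.contDiffWithinAt hg.contDiffWithinAt
  simp only [iteratedDerivWithin_univ] at leibniz
  rw [leibniz, ← Finset.sum_flip]
  refine Finset.sum_congr rfl fun k hk => ?_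
  have hkn : k ≤ n := Finset.mem_range_succ_iff.1 hk
  rw [Nat.choose_symm hkn, Nat.sub_sub_self hkn]

/-- The matrix whose columns are the derivatives of `γ` at `x` of orders `0, …, n`. -/
noncomputable def derivMatrix {ι : Type*} [Fintype ι] (n : ℕ) (γ : 𝕜 → ι → 𝕜) (x : 𝕜) :
    Matrix ι (Fin (n + 1)) 𝕜 :=
  Matrix.of fun i j => iteratedDeriv j γ x i

/-- The matrix of the Leibniz rule: its `j`-th column holds the coefficients of the `j`-th
derivative of `f • g` at `x` with respect to the derivatives of `g` of orders `0, …, n`. The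
binomial coefficient makes the entries below the diagonal vanish, where the subtraction `j - k`
is truncated. -/
noncomputable def leibnizMatrix (n : ℕ) (f : 𝕜 → 𝕜) (x : 𝕜) :
    Matrix (Fin (n + 1)) (Fin (n + 1)) 𝕜 :=
  Matrix.of fun k j => (j : ℕ).choose k * iteratedDeriv (j - k) f x

lemma leibnizMatrix_isUpperTriangular (n : ℕ) (f : 𝕜 → 𝕜) (x : 𝕜) :
    (leibnizMatrix n f x).IsUpperTriangular := by
  intro k j (hjk : j < k)
  simp [leibnizMatrix, Nat.choose_eq_zero_of_lt hjk]

lemma det_leibnizMatrix (n : ℕ) (f : 𝕜 → 𝕜) (x : 𝕜) :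
    (leibnizMatrix n f x).det = f x ^ (n + 1) := by
  rw [Matrix.det_of_isUpperTriangular (leibnizMatrix_isUpperTriangular n f x)]
  simp [leibnizMatrix]

lemma derivMatrix_smul {ι : Type*} [Fintype ι] {n : ℕ} {f : 𝕜 → 𝕜} {γ : 𝕜 → ι → 𝕜}
    (hf : ContDiffAt 𝕜 n f x) (hγ : ContDiffAt 𝕜 n γ x) :
    derivMatrix n (f • γ) x = derivMatrix n γ x * leibnizMatrix n f x := by
  ext i j
  have hjn : (j : ℕ) ≤ n := Nat.lt_succ_iff.1 j.isLt
  have hj : ((j : ℕ) : WithTop ℕ∞) ≤ n := by exact_mod_cast hjn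
  let term (k : ℕ) : 𝕜 :=
    iteratedDeriv k γ x i * ((j : ℕ).choose k * iteratedDeriv (j - k) f x)
  have term_eq_zero (k : ℕ) (hk : k ∉ Finset.range (j + 1)) : term k = 0 := by
    have hjk : (j : ℕ) < k := by simpa [Nat.lt_succ_iff] using hk
    simp [term, Nat.choose_eq_zero_of_lt hjk]
  calc derivMatrix n (f • γ) x i j
      = ∑ k ∈ Finset.range (j + 1), term k := by
        simp only [derivMatrix, Matrix.of_apply,
          iteratedDeriv_smul_eq_sum (hf.of_le hj) (hγ.of_le hj), Finset.sum_apply,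
          Pi.smul_apply, smul_eq_mul, term]
        refine Finset.sum_congr rfl fun k _ => ?_
        rw [nsmul_eq_mul]
        ring
    _ = ∑ k ∈ Finset.range (n + 1), term k :=
        Finset.sum_subset (Finset.range_mono (Nat.succ_le_succ hjn))
          fun k _ hk => term_eq_zero k hk
    _ = ∑ k : Fin (n + 1), term k := (Fin.sum_univ_eq_sum_range term (n + 1)).symm
    _ = (derivMatrix n γ x * leibnizMatrix n f x) i j := by
        simp only [Matrix.mul_apply, derivMatrix, leibnizMatrix, Matrix.of_apply, term]

end LeibnizRule

lemma detCurve_succ_smul {n : ℕ} {f : ℝ → ℝ} {γ : ℝ → Fin (n + 1) → ℝ} {t : ℝ}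
    (hf : ContDiffAt ℝ n f t) (hγ : ContDiffAt ℝ n γ t) :
    detCurve (n + 1) (f • γ) t = detCurve (n + 1) γ t * f t ^ (n + 1) := by
  change (derivMatrix n (f • γ) t).det = (derivMatrix n γ t).det * f t ^ (n + 1)
  rw [derivMatrix_smul hf hγ, Matrix.det_mul, det_leibnizMatrix]

section EuclideanNorm

variable {ι : Type*} [Fintype ι]

lemma sqrt_sum_sq_eq_norm_toLp (v : ι → ℝ) :
    Real.sqrt (∑ i, v i ^ 2) = ‖WithLp.toLp 2 v‖ := by
  simp [EuclideanSpace.norm_eq]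

lemma contDiffAt_norm_toLp {E : Type*} [NormedAddCommGroup E] [NormedSpace ℝ E]
    {n : WithTop ℕ∞} {g : E → ι → ℝ} {x : E} (hg : ContDiffAt ℝ n g x) (hx : g x ≠ 0) :
    ContDiffAt ℝ n (fun y => ‖WithLp.toLp 2 (g y)‖) x :=
  (PiLp.contDiff_toLp.contDiffAt.comp x hg).norm ℝ (by simpa using hx)

end EuclideanNorm

theorem locally_convex_iff_normalized_general {n : ℕ} {γ : ℝ → Fin (n + 1) → ℝ} {t : ℝ}
    (hγ : ContDiffAt ℝ n γ t) (hne : γ t ≠ 0) :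
    detCurve (n + 1) γ t ≠ 0 ↔
      detCurve (n + 1) (fun s x => γ s x / Real.sqrt (∑ y, γ s y ^ 2)) t ≠ 0 := by
  let f (s : ℝ) : ℝ := ‖WithLp.toLp 2 (γ s)‖⁻¹
  have normalized_eq : (fun s x => γ s x / Real.sqrt (∑ y, γ s y ^ 2)) = f • γ := by
    ext s x
    simp [f, sqrt_sum_sq_eq_norm_toLp, div_eq_inv_mul]
  have norm_ne_zero : ‖WithLp.toLp 2 (γ t)‖ ≠ 0 := by simpa using hne
  have hf : ContDiffAt ℝ n f t := (contDiffAt_norm_toLp hγ hne).inv norm_ne_zero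
  have factor_ne_zero : f t ^ (n + 1) ≠ 0 := pow_ne_zero _ (inv_ne_zero norm_ne_zero)
  rw [normalized_eq, detCurve_succ_smul hf hγ, mul_ne_zero_iff_right factor_ne_zero]

/-- A nowhere vanishing curve is locally convex iff its radial projection to the unit
sphere `Sⁿ` is locally convex. -/
theorem locally_convex_iff_normalized (n : ℕ) (hn : 1 ≤ n)
    (γ : ℝ → Fin (n+1) → ℝ)
    (hγ : ContDiff ℝ (⊤ : ℕ∞) γ)
    (hne : ∀ t ∈ Icc (0 : ℝ) 1, γ t ≠ 0) :
    (∀ t ∈ Icc (0 : ℝ) 1, detCurve (n+1) γ t ≠ 0) ↔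
      ∀ t ∈ Icc (0 : ℝ) 1,
        detCurve (n+1) (fun s x => γ s x / Real.sqrt (∑ y, γ s y ^ 2)) t ≠ 0 :=
  forall₂_congr fun t ht => locally_convex_iff_normalized_general
    (hγ.contDiffAt.of_le (by exact_mod_cast le_top)) (hne t ht)
end

section
/- Central projection preserves global convexity: let n ≥ 1 and let γ = (γ₁, …, γ_{n+1}) : [0,1] → ℝ^{n+1} be a smooth curve with γ₁(t) > 0 for all t ∈ [0,1]. Then γ is globally convex if and only if the curve t ↦ (1, γ₂(t)/γ₁(t), …, γ_{n+1}(t)/γ₁(t)) is globally convex. -/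
open Set

/-- Global convexity of a curve in `ℝ^m` on the interval `I`: every hyperplane through the
origin meets it in at most `m - 1` points of the interior of `I`, counted with multiplicity. -/
def GloballyConvex (m : ℕ) (γ : ℝ → Fin m → ℝ) (I : Set ℝ) : Prop :=
  ∀ a : Fin m → ℝ, a ≠ 0 →
    ∀ (N : ℕ) (t : Fin N → ℝ) (k : Fin N → ℕ),
      Function.Injective t → (∀ i, t i ∈ interior I) → (∀ i, 1 ≤ k i) →
      (∀ i : Fin N, ∀ j < k i, iteratedDeriv j (fun s => ∑ x, a x * γ s x) (t i) = 0) →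
      ∑ i, k i ≤ m - 1

/-!
If `γ = h δ` with `h` a scalar function, then `⟨a, γ⟩ = h ⟨a, δ⟩` for every `a`, so by the Leibniz
rule `⟨a, γ⟩` vanishes at each point at least to the order to which `⟨a, δ⟩` does. Global convexity
of `γ` thus gives that of `δ`, and conversely when `h` has no zeros, since then `δ = h⁻¹ γ`. Central
projection multiplies `γ` by `1 / γ₁`.
-/

open scoped ContDiff

theorem iteratedDeriv_smul_eq_zero {𝕜 𝔸 F : Type*} [NontriviallyNormedField 𝕜] [NormedRing 𝔸]
    [NormedAlgebra 𝕜 𝔸] [NormedAddCommGroup F] [NormedSpace 𝕜 F] [Module 𝔸 F] [IsBoundedSMul 𝔸 F]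
    [IsScalarTower 𝕜 𝔸 F] {f : 𝕜 → 𝔸} {g : 𝕜 → F} {n : ℕ} {x : 𝕜}
    (hf : ContDiffAt 𝕜 n f x) (hg : ContDiffAt 𝕜 n g x)
    (hg₀ : ∀ i ≤ n, iteratedDeriv i g x = 0) :
    iteratedDeriv n (f • g) x = 0 := by
  rw [← iteratedDerivWithin_univ, iteratedDerivWithin_smul (Set.mem_univ x) uniqueDiffOn_univ
    hf.contDiffWithinAt hg.contDiffWithinAt]
  refine Finset.sum_eq_zero fun i _ ↦ ?_
  rw [iteratedDerivWithin_univ, iteratedDerivWithin_univ, hg₀ _ (n.sub_le i), smul_zero, smul_zero]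

namespace GloballyConvex

variable {m : ℕ} {γ δ : ℝ → Fin m → ℝ} {h : ℝ → ℝ} {I : Set ℝ}

theorem congr (hγ : GloballyConvex m γ I) (hδ : EqOn δ γ (interior I)) :
    GloballyConvex m δ I := by
  intro a ha N t k ht htI hk hzero
  refine hγ a ha N t k ht htI hk fun i j hj ↦ ?_
  have hpair : EqOn (fun s ↦ a ⬝ᵥ δ s) (fun s ↦ a ⬝ᵥ γ s) (interior I) :=
    fun s hs ↦ congrArg (a ⬝ᵥ ·) (hδ hs)
  exact (hpair.iteratedDeriv_of_isOpen isOpen_interior j (htI i)).symm.trans (hzero i j hj)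

theorem of_smul (hh : ContDiffOn ℝ ∞ h (interior I)) (hγ : ContDiffOn ℝ ∞ γ (interior I))
    (hconv : GloballyConvex m (fun t ↦ h t • γ t) I) : GloballyConvex m γ I := by
  intro a ha N t k ht htI hk hzero
  refine hconv a ha N t k ht htI hk fun i j hj ↦ ?_
  have hmem : interior I ∈ nhds (t i) := isOpen_interior.mem_nhds (htI i)
  have hj_le : (j : WithTop ℕ∞) ≤ ∞ := mod_cast le_top
  have hpair : (fun s ↦ a ⬝ᵥ (h s • γ s)) = h • fun s ↦ a ⬝ᵥ γ s :=
    funext fun s ↦ dotProduct_smul (h s) a (γ s)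
  have hpair_smooth : ContDiffAt ℝ ∞ (fun s ↦ a ⬝ᵥ γ s) (t i) :=
    ContDiffAt.sum fun x _ ↦ contDiffAt_const.mul (contDiffAt_pi.1 (hγ.contDiffAt hmem) x)
  change iteratedDeriv j (fun s ↦ a ⬝ᵥ (h s • γ s)) (t i) = 0
  rw [hpair]
  exact iteratedDeriv_smul_eq_zero ((hh.contDiffAt hmem).of_le hj_le) (hpair_smooth.of_le hj_le)
    fun l hl ↦ hzero i l (hl.trans_lt hj)

end GloballyConvex

theorem globallyConvex_congr {m : ℕ} {γ δ : ℝ → Fin m → ℝ} {I : Set ℝ}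
    (h : EqOn γ δ (interior I)) : GloballyConvex m γ I ↔ GloballyConvex m δ I :=
  ⟨fun hγ ↦ hγ.congr h.symm, fun hδ ↦ hδ.congr h⟩

theorem globallyConvex_smul_iff {m : ℕ} {γ : ℝ → Fin m → ℝ} {h : ℝ → ℝ} {I : Set ℝ}
    (hh : ContDiffOn ℝ ∞ h (interior I)) (hh₀ : ∀ t ∈ interior I, h t ≠ 0)
    (hγ : ContDiffOn ℝ ∞ γ (interior I)) :
    GloballyConvex m (fun t ↦ h t • γ t) I ↔ GloballyConvex m γ I := by
  refine ⟨.of_smul hh hγ, fun hconv ↦ .of_smul (hh.inv hh₀) (hh.smul hγ) (hconv.congr ?_)⟩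
  exact fun t ht ↦ inv_smul_smul₀ (hh₀ t ht) (γ t)

/-- The central projection of `ℝ^(n+1)` from the origin onto the affine hyperplane of vectors with
first coordinate `1`. It is meaningful only where `v 0 ≠ 0`; elsewhere division by zero makes it
the first basis vector. -/
noncomputable def centralProjection {n : ℕ} (v : Fin (n + 1) → ℝ) : Fin (n + 1) → ℝ :=
  fun i ↦ if (i : ℕ) = 0 then 1 else v i / v 0

theorem centralProjection_eq_inv_smul {n : ℕ} {v : Fin (n + 1) → ℝ} (hv : v 0 ≠ 0) :
    centralProjection v = (v 0)⁻¹ • v := by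
  ext i
  refine Fin.cases ?_ (fun j ↦ ?_) i
  · simp [centralProjection, hv]
  · simp [centralProjection, div_eq_inv_mul]

theorem globally_convex_iff_central_projection_general {n : ℕ} {γ : ℝ → Fin (n + 1) → ℝ}
    {I : Set ℝ} (hγ : ContDiffOn ℝ ∞ γ (interior I)) (hγ₀ : ∀ t ∈ interior I, γ t 0 ≠ 0) :
    GloballyConvex (n + 1) γ I ↔ GloballyConvex (n + 1) (fun t ↦ centralProjection (γ t)) I := by
  have hproj : EqOn (fun t ↦ centralProjection (γ t)) (fun t ↦ (γ t 0)⁻¹ • γ t) (interior I) :=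
    fun t ht ↦ centralProjection_eq_inv_smul (hγ₀ t ht)
  have hinv_smooth : ContDiffOn ℝ ∞ (fun t ↦ (γ t 0)⁻¹) (interior I) :=
    (contDiffOn_pi.1 hγ 0).inv hγ₀
  rw [globallyConvex_congr hproj,
    globallyConvex_smul_iff hinv_smooth (fun t ht ↦ inv_ne_zero (hγ₀ t ht)) hγ]

/-- Central projection preserves global convexity: if the first coordinate of `γ` is
positive, `γ` is globally convex iff `t ↦ (1, γ₂/γ₁, …, γ_{n+1}/γ₁)` is. -/
theorem globally_convex_iff_central_projection (n : ℕ) (hn : 1 ≤ n)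
    (γ : ℝ → Fin (n+1) → ℝ)
    (hγ : ContDiff ℝ (⊤ : ℕ∞) γ)
    (hpos : ∀ t ∈ Icc (0 : ℝ) 1, 0 < γ t 0) :
    GloballyConvex (n+1) γ (Icc 0 1) ↔
      GloballyConvex (n+1)
        (fun t i => if (i : ℕ) = 0 then 1 else γ t i / γ t 0) (Icc 0 1) :=
  globally_convex_iff_central_projection_general hγ.contDiffOn
    fun t ht ↦ (hpos t (interior_subset ht)).ne'
end
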